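/- arXiv:1208.4697 — 3 statements merged into one kernel-verified Lean document; each statement's English description precedes it below -/
import Mathlib

section
/- Let X ⊆ ℝⁿ be an open p-convex set and let f : X → ℝⁿ be a C¹ cooperative vector field. If γ, δ : [0,T] → X are solutions of the system ẋ = f(x) with γ(0) ≤ δ(0), then γ(t) ≤ δ(t) for every t ∈ [0,T]. -/
open Set Filter Topology

noncomputable section

/-- `f` is a cooperative vector field on `X`: the off-diagonal entries of the
Jacobian are nonnegative. -/
def coopVF {n : ℕ} (f : (Fin n → ℝ) → (Fin n → ℝ)) (X : Set (Fin n → ℝ)) : Prop :=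
  ∀ x ∈ X, ∀ i j : Fin n, i ≠ j → 0 ≤ fderiv ℝ f x (Pi.single j 1) i

/-- The Jacobian matrix of `f` at `x`. -/
def jacMat {n : ℕ} (f : (Fin n → ℝ) → (Fin n → ℝ)) (x : Fin n → ℝ) :
    Fin n → Fin n → ℝ :=
  fun i j => fderiv ℝ f x (Pi.single j 1) i

/-- A matrix is irreducible if for every nonempty proper subset `S` of indices there
are `i ∈ S`, `j ∉ S` with `A i j ≠ 0`. -/
def matIrred {n : ℕ} (A : Fin n → Fin n → ℝ) : Prop :=
  ∀ S : Set (Fin n), S.Nonempty → S ≠ Set.univ → ∃ i ∈ S, ∃ j ∉ S, A i j ≠ 0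

/-- `X` is p-convex: the segment joining any two order-related points of `X` lies in `X`. -/
def pconvex {n : ℕ} (X : Set (Fin n → ℝ)) : Prop :=
  ∀ x ∈ X, ∀ y ∈ X, x < y → segment ℝ x y ⊆ X

/-- `x ≪ y`: strict inequality in every coordinate. -/
def strLt {n : ℕ} (x y : Fin n → ℝ) : Prop := ∀ i, x i < y i

/-- `γ` is a solution of `ẋ = f(x)` on the time interval `I`, with values in `X`. -/
def IsSolOn {n : ℕ} (f : (Fin n → ℝ) → (Fin n → ℝ)) (X : Set (Fin n → ℝ))
    (I : Set ℝ) (γ : ℝ → Fin n → ℝ) : Prop :=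
  (∀ t ∈ I, γ t ∈ X) ∧ (∀ t ∈ I, HasDerivWithinAt γ (f (γ t)) I t)

/-- The ω-limit set (within `X`) of a curve `γ`. -/
def omegaSet {n : ℕ} (X : Set (Fin n → ℝ)) (γ : ℝ → Fin n → ℝ) :
    Set (Fin n → ℝ) :=
  {y | y ∈ X ∧ ∃ t : ℕ → ℝ, Tendsto t atTop atTop ∧
    Tendsto (fun k => γ (t k)) atTop (𝓝 y)}

/-- The α-limit set (within `X`) of a curve `γ`. -/
def alphaSet {n : ℕ} (X : Set (Fin n → ℝ)) (γ : ℝ → Fin n → ℝ) :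
    Set (Fin n → ℝ) :=
  {y | y ∈ X ∧ ∃ t : ℕ → ℝ, Tendsto t atTop atBot ∧
    Tendsto (fun k => γ (t k)) atTop (𝓝 y)}

/-- The Euclidean norm on `Fin n → ℝ`. -/
def eunorm {n : ℕ} (v : Fin n → ℝ) : ℝ := Real.sqrt (∑ i, (v i) ^ 2)

/-- `X` is order-convex: it contains the order interval of any two of its points. -/
def orderConvex {n : ℕ} (X : Set (Fin n → ℝ)) : Prop :=
  ∀ x ∈ X, ∀ y ∈ X, x ≤ y → Set.Icc x y ⊆ X

lemma linStep {n : ℕ} {a b L : ℝ} {w w' : ℝ → Fin n → ℝ}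
    (hw : ∀ t ∈ Icc a b, HasDerivWithinAt w (w' t) (Icc a b) t)
    (H : ∀ t ∈ Icc a b, ∀ i, ∃ c : Fin n → ℝ, (∀ j, j ≠ i → 0 ≤ c j) ∧ (∀ j, c j ≤ L) ∧
      w' t i = ∑ j, c j * w t j)
    (h0 : 0 ≤ w a) : ∀ t ∈ Icc a b, 0 ≤ w t := by
  set M : ℝ := n * L + 1 with hM
  have key : ∀ ε > 0, ∀ t ∈ Icc a b, ∀ i, 0 ≤ w t i + ε * Real.exp (M * (t - a)) := by
    intro ε hε
    have hder : ∀ t ∈ Icc a b, ∀ i, HasDerivWithinAt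
        (fun s => w s i + ε * Real.exp (M * (s - a)))
        (w' t i + ε * (Real.exp (M * (t - a)) * M)) (Icc a b) t := by
      intro t ht i
      have h1 := (hasDerivWithinAt_pi.1 (hw t ht)) i
      have h2 : HasDerivAt (fun s => ε * Real.exp (M * (s - a)))
          (ε * (Real.exp (M * (t - a)) * M)) t := by
        have h3 : HasDerivAt (fun s => M * (s - a)) M t := by
          simpa using ((hasDerivAt_id t).sub_const a).const_mul M
        exact (h3.exp).const_mul ε
      exact h1.add h2.hasDerivWithinAt
    have hsub : Icc a b ⊆ {t | ∀ i, 0 ≤ w t i + ε * Real.exp (M * (t - a))} := by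
      apply IsClosed.Icc_subset_of_forall_mem_nhdsWithin
      · have : {t | ∀ i, 0 ≤ w t i + ε * Real.exp (M * (t - a))} ∩ Icc a b
            = Icc a b ∩ (fun t i => w t i + ε * Real.exp (M * (t - a))) ⁻¹' (Ici 0) := by
          ext t
          simp only [mem_inter_iff, mem_setOf_eq, mem_preimage, mem_Ici, Pi.le_def, Pi.zero_apply]
          tauto
        rw [this]
        apply ContinuousOn.preimage_isClosed_of_isClosed _ isClosed_Icc isClosed_Ici
        exact continuousOn_pi.2 fun i t ht => (hder t ht i).continuousWithinAt
      · intro i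
        have := h0 i
        simp only [sub_self, mul_zero, Real.exp_zero, Pi.zero_apply] at *
        linarith
      · rintro t ⟨ht, htI⟩
        have htI' : t ∈ Icc a b := ⟨htI.1, htI.2.le⟩
        have hnb : 𝓝[>] t ≤ 𝓝[Icc a b] t := by
          rw [nhdsWithin_le_iff]
          exact mem_of_superset (Ioo_mem_nhdsGT htI.2)
            fun s hs => ⟨htI.1.trans hs.1.le, hs.2.le⟩
        have : ∀ᶠ s in 𝓝[>] t, ∀ i, 0 ≤ w s i + ε * Real.exp (M * (s - a)) := by
          rw [eventually_all]
          intro i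
          rcases (ht i).lt_or_eq with hpos | hzero
          · have := ((hder t htI' i).continuousWithinAt.tendsto.mono_left hnb).eventually
              (lt_mem_nhds hpos)
            exact this.mono fun s hs => hs.le
          · obtain ⟨c, hc0, hcL, hceq⟩ := H t htI' i
            set E := ε * Real.exp (M * (t - a)) with hE
            have hEpos : 0 < E := by positivity
            have hdpos : 0 < w' t i + ε * (Real.exp (M * (t - a)) * M) := by
              have e1 : ∑ j : Fin n, (-(L * E)) ≤ ∑ j, c j * w t j := by
                apply Finset.sum_le_sum
                intro j _
                have hL : c j * E ≤ L * E := mul_le_mul_of_nonneg_right (hcL j) hEpos.le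
                by_cases hj : j = i
                · subst hj
                  have : w t j = -E := by linarith
                  rw [this]; linarith
                · have := mul_nonneg (hc0 j hj) (ht j)
                  rw [← hE] at this
                  linarith
              simp only [Finset.sum_const, Finset.card_univ, Fintype.card_fin, nsmul_eq_mul] at e1
              rw [hceq]
              have e2 : ε * (Real.exp (M * (t - a)) * M) = n * (L * E) + E := by
                rw [hE, hM]; ring
              linarith
            have hd := (hder t htI' i).mono_of_mem_nhdsWithin (hnb self_mem_nhdsWithin : Icc a b ∈ 𝓝[Ioi t] t)
            have hs := (hasDerivWithinAt_iff_tendsto_slope' (by simp)).1 hd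
            filter_upwards [hs.eventually (lt_mem_nhds hdpos), self_mem_nhdsWithin] with s h1 h2
            rw [slope_def_field] at h1
            have h3 : 0 < s - t := sub_pos.2 h2
            have h4 := (div_pos_iff_of_pos_right h3).1 h1
            linarith
        exact this
    exact fun t ht => hsub ht
  intro t ht i
  apply le_of_forall_pos_le_add
  intro η hη
  have := key (η / Real.exp (M * (t - a))) (by positivity) t ht i
  rwa [div_mul_cancel₀ _ (Real.exp_ne_zero _)] at this

lemma coefs {n : ℕ} {X K : Set (Fin n → ℝ)} (hX : IsOpen X)
    {f : (Fin n → ℝ) → (Fin n → ℝ)} (hf : ContDiffOn ℝ 1 f X) (hcoop : coopVF f X)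
    (hK : Convex ℝ K) (hKX : K ⊆ X) {L : ℝ} (hL : ∀ z ∈ K, ‖fderiv ℝ f z‖ ≤ L)
    {x y : Fin n → ℝ} (hx : x ∈ K) (hy : y ∈ K) (i : Fin n) :
    ∃ c : Fin n → ℝ, (∀ j, j ≠ i → 0 ≤ c j) ∧ (∀ j, c j ≤ L) ∧
      f y i - f x i = ∑ j, c j * (y j - x j) := by
  have hd : ∀ z ∈ K, HasFDerivWithinAt (fun z => f z i)
      ((ContinuousLinearMap.proj i : (Fin n → ℝ) →L[ℝ] ℝ).comp (fderiv ℝ f z)) K z := by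
    intro z hz
    have h1 : HasFDerivAt f (fderiv ℝ f z) z :=
      ((hf.differentiableOn one_ne_zero).differentiableAt (hX.mem_nhds (hKX hz))).hasFDerivAt
    exact ((hasFDerivAt_pi'.1 h1) i).hasFDerivWithinAt
  obtain ⟨z, hz, he⟩ := domain_mvt hd hK hx hy
  have hzK := hK.segment_subset hx hy hz
  refine ⟨fun j => fderiv ℝ f z (Pi.single j 1) i,
    fun j hj => hcoop z (hKX hzK) i j hj.symm, fun j => ?_, ?_⟩
  · have h1 := norm_le_pi_norm (fderiv ℝ f z (Pi.single j 1)) i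
    have h2 := (fderiv ℝ f z).le_opNorm (Pi.single j 1)
    have h3 : ‖(Pi.single j 1 : Fin n → ℝ)‖ = 1 := by rw [Pi.norm_single]; simp
    rw [h3, mul_one] at h2
    exact (le_abs_self _).trans (h1.trans (h2.trans (hL z hzK)))
  · rw [he]
    conv_lhs => rw [pi_eq_sum_univ' (y - x)]
    simp only [ContinuousLinearMap.comp_apply, map_sum, map_smul, ContinuousLinearMap.proj_apply,
      smul_eq_mul, Pi.sub_apply]
    refine Finset.sum_congr rfl fun j _ => ?_
    rw [mul_comm]

/-- monotonicity of cooperative systems (Müller–Kamke). -/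
theorem stmt_0 {n : ℕ} {X : Set (Fin n → ℝ)} (hX : IsOpen X) (hpc : pconvex X)
    {f : (Fin n → ℝ) → (Fin n → ℝ)} (hf : ContDiffOn ℝ 1 f X) (hcoop : coopVF f X)
    {T : ℝ} (hT : 0 ≤ T) {γ δ : ℝ → Fin n → ℝ}
    (hγ : IsSolOn f X (Set.Icc 0 T) γ) (hδ : IsSolOn f X (Set.Icc 0 T) δ)
    (h0 : γ 0 ≤ δ 0) :
    ∀ t ∈ Set.Icc (0 : ℝ) T, γ t ≤ δ t := by
  have hγc : ContinuousOn γ (Icc 0 T) := fun t ht => (hγ.2 t ht).continuousWithinAt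
  have hδc : ContinuousOn δ (Icc 0 T) := fun t ht => (hδ.2 t ht).continuousWithinAt
  have hsub : Icc 0 T ⊆ {t | γ t ≤ δ t} := by
    apply IsClosed.Icc_subset_of_forall_mem_nhdsWithin
    · have : {t | γ t ≤ δ t} ∩ Icc 0 T = Icc 0 T ∩ (fun t => δ t - γ t) ⁻¹' (Ici 0) := by
        ext t
        simp only [mem_inter_iff, mem_setOf_eq, mem_preimage, mem_Ici, sub_nonneg]
        tauto
      rw [this]
      exact (hδc.sub hγc).preimage_isClosed_of_isClosed isClosed_Icc isClosed_Ici
    · exact h0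
    · rintro a ⟨ha, haI⟩
      have haI' : a ∈ Icc 0 T := ⟨haI.1, haI.2.le⟩
      have hseg : segment ℝ (γ a) (δ a) ⊆ X := by
        rcases (show γ a ≤ δ a from ha).lt_or_eq with h | h
        · exact hpc _ (hγ.1 a haI') _ (hδ.1 a haI') h
        · rw [h, segment_same]
          simpa using hδ.1 a haI'
      have hcomp : IsCompact (segment ℝ (γ a) (δ a)) := by
        rw [segment_eq_image]
        exact isCompact_Icc.image (by fun_prop)
      obtain ⟨r, hr, hrX⟩ := hcomp.exists_cthickening_subset_open hX hseg
      set K := Metric.cthickening r (segment ℝ (γ a) (δ a)) with hKdef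
      have hKc : IsCompact K := hcomp.cthickening
      have hKconv : Convex ℝ K := (convex_segment _ _).cthickening r
      obtain ⟨L, hL⟩ := hKc.exists_bound_of_continuousOn
        ((hf.continuousOn_fderiv_of_isOpen hX le_rfl).mono hrX)
      have hKnhds : ∀ z ∈ segment ℝ (γ a) (δ a), K ∈ 𝓝 z := fun z hz =>
        mem_of_superset (Metric.isOpen_thickening.mem_nhds
          (Metric.self_subset_thickening hr _ hz)) (Metric.thickening_subset_cthickening _ _)
      have hnb : 𝓝[≥] a ≤ 𝓝[Icc 0 T] a := by
        rw [nhdsWithin_le_iff]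
        exact mem_of_superset (Ico_mem_nhdsGE haI.2)
          fun s hs => ⟨haI.1.trans hs.1, hs.2.le⟩
      have e1 := ((hγc a haI').tendsto.mono_left hnb) (hKnhds _ (left_mem_segment ℝ _ _))
      have e2 := ((hδc a haI').tendsto.mono_left hnb) (hKnhds _ (right_mem_segment ℝ _ _))
      have e3 := hnb (self_mem_nhdsWithin (a := a) (s := Icc 0 T))
      obtain ⟨b, hab, hb⟩ := (mem_nhdsGE_iff_exists_Icc_subset).1
        (inter_mem (inter_mem e1 e2) e3)
      have hbI : Icc a b ⊆ Icc 0 T := fun t ht => (hb ht).2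
      have hmain := linStep (a := a) (b := b) (L := L) (w := fun t => δ t - γ t)
        (w' := fun t => f (δ t) - f (γ t))
        (fun t ht => ((hδ.2 t (hbI ht)).mono hbI).sub ((hγ.2 t (hbI ht)).mono hbI))
        (fun t ht i => coefs hX hf hcoop hKconv hrX hL (hb ht).1.1 (hb ht).1.2 i)
        (sub_nonneg.2 ha)
      exact mem_of_superset (Icc_mem_nhdsGT hab) fun t ht => sub_nonneg.1 (hmain t ht)
  exact fun t ht => hsub ht
end
end

section
/- Let X ⊆ ℝⁿ be an open p-convex set and let f : X → ℝⁿ be a C¹ cooperative irreducible vector field. If γ, δ : [0,T] → X are solutions of the system ẋ = f(x) with γ(0) < δ(0), then γ(t) ≪ δ(t) for every t ∈ (0,T]. -/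
open Set Filter Topology

noncomputable section

/-! ### Helper lemmas -/

/-- The derivative of the squared negative part. -/
theorem hasDerivAt_negSq (x : ℝ) :
    HasDerivAt (fun y : ℝ => (min y 0) ^ 2) (2 * min x 0) x := by
  have key : ∀ y : ℝ, y ≠ 0 → HasDerivAt (fun y : ℝ => (min y 0) ^ 2) (2 * min y 0) y := by
    intro y hy
    rcases lt_or_gt_of_ne hy with h | h
    · have h1 : HasDerivAt (fun y : ℝ => y ^ 2) (2 * min y 0) y := by
        rw [min_eq_left h.le]
        simpa using hasDerivAt_pow 2 y
      refine h1.congr_of_eventuallyEq ?_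
      filter_upwards [Iio_mem_nhds h] with z hz
      rw [min_eq_left (le_of_lt hz)]
    · have h1 : HasDerivAt (fun _ : ℝ => (0 : ℝ)) (2 * min y 0) y := by
        rw [min_eq_right h.le, mul_zero]
        exact hasDerivAt_const y 0
      refine h1.congr_of_eventuallyEq ?_
      filter_upwards [Ioi_mem_nhds h] with z hz
      rw [min_eq_right (le_of_lt hz)]
      norm_num
  by_cases hx : x = 0
  · subst hx
    refine hasDerivAt_of_hasDerivAt_of_ne (g := fun y : ℝ => 2 * min y 0) key ?_ ?_
    · fun_prop
    · fun_prop
  · exact key x hx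

/-- Componentwise mean value theorem along a segment. -/
theorem mvt_comp {n : ℕ} {X : Set (Fin n → ℝ)} (hX : IsOpen X)
    {f : (Fin n → ℝ) → (Fin n → ℝ)} (hf : ContDiffOn ℝ 1 f X)
    {x y : Fin n → ℝ} (hseg : segment ℝ x y ⊆ X) (i : Fin n) :
    ∃ z ∈ segment ℝ x y,
      f y i - f x i = ∑ j, fderiv ℝ f z (Pi.single j 1) i * (y j - x j) := by
  have hd : ∀ z ∈ segment ℝ x y, HasFDerivWithinAt (fun u => f u i)
      ((ContinuousLinearMap.proj (R := ℝ) (φ := fun _ : Fin n => ℝ) i).comp (fderiv ℝ f z))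
      (segment ℝ x y) z := by
    intro z hz
    have h1 : HasFDerivAt f (fderiv ℝ f z) z :=
      ((hf.differentiableOn (by norm_num)).differentiableAt
        (hX.mem_nhds (hseg hz))).hasFDerivAt
    exact (hasFDerivAt_pi'.1 h1 i).hasFDerivWithinAt
  obtain ⟨z, hz, h⟩ := domain_mvt hd (convex_segment x y) (left_mem_segment ℝ x y)
    (right_mem_segment ℝ x y)
  refine ⟨z, hz, h.trans ?_⟩
  have e : y - x = ∑ j, (y j - x j) • (Pi.single j 1 : Fin n → ℝ) := by
    ext k
    simp [Finset.sum_apply, Pi.single_apply]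
  conv_lhs => rw [e]
  simp only [map_sum, map_smul, ContinuousLinearMap.comp_apply, ContinuousLinearMap.proj_apply,
    smul_eq_mul]
  exact Finset.sum_congr rfl fun j _ => mul_comm _ _

theorem entry_le {n : ℕ} (A : (Fin n → ℝ) →L[ℝ] (Fin n → ℝ)) {M : ℝ} (h : ‖A‖ ≤ M)
    (i j : Fin n) : |A (Pi.single j 1) i| ≤ M := by
  have h1 : ‖A (Pi.single j 1) i‖ ≤ ‖A (Pi.single j 1)‖ := norm_le_pi_norm _ i
  have h2 := A.le_opNorm (Pi.single j 1)
  rw [Pi.norm_single, norm_one, mul_one] at h2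
  exact h1.trans (h2.trans h)

/-- The lower bound for the differential inequality. -/
theorem diff_lower {n : ℕ} {X : Set (Fin n → ℝ)} (hX : IsOpen X)
    {f : (Fin n → ℝ) → (Fin n → ℝ)} (hf : ContDiffOn ℝ 1 f X) (hcoop : coopVF f X)
    {x y : Fin n → ℝ} (hseg : segment ℝ x y ⊆ X) (hxy : x ≤ y) {M : ℝ}
    (i : Fin n) (hM : y i ≠ x i → ∀ z ∈ segment ℝ x y, ‖fderiv ℝ f z‖ ≤ M) :
    -M * (y i - x i) ≤ f y i - f x i := by
  obtain ⟨z, hz, h⟩ := mvt_comp hX hf hseg i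
  have hle : fderiv ℝ f z (Pi.single i 1) i * (y i - x i) ≤
      ∑ j, fderiv ℝ f z (Pi.single j 1) i * (y j - x j) := by
    rw [← Finset.add_sum_erase _ _ (Finset.mem_univ i)]
    have : 0 ≤ ∑ j ∈ Finset.univ.erase i, fderiv ℝ f z (Pi.single j 1) i * (y j - x j) := by
      refine Finset.sum_nonneg fun j hj => ?_
      exact mul_nonneg (hcoop z (hseg hz) i j (Finset.ne_of_mem_erase hj).symm)
        (sub_nonneg.2 (hxy j))
    linarith
  rw [h]
  refine le_trans ?_ hle
  by_cases hi : y i = x i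
  · simp [hi]
  · have := neg_le_of_abs_le (entry_le _ (hM hi z hz) i i)
    exact mul_le_mul_of_nonneg_right this (sub_nonneg.2 (hxy i))

/-- The quadratic estimate for the negative parts. -/
theorem quad_est {n : ℕ} {X : Set (Fin n → ℝ)} (hX : IsOpen X)
    {f : (Fin n → ℝ) → (Fin n → ℝ)} (hf : ContDiffOn ℝ 1 f X) (hcoop : coopVF f X)
    {x y : Fin n → ℝ} (hseg : segment ℝ x y ⊆ X) {M : ℝ}
    (hM : ∀ z ∈ segment ℝ x y, ‖fderiv ℝ f z‖ ≤ M) :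
    ∑ i, 2 * min (y i - x i) 0 * (f y i - f x i) ≤
      2 * n * M * ∑ i, (min (y i - x i) 0) ^ 2 := by
  have h1 : ∀ i, 2 * min (y i - x i) 0 * (f y i - f x i) ≤
      ∑ j, M * ((min (y i - x i) 0) ^ 2 + (min (y j - x j) 0) ^ 2) := by
    intro i
    obtain ⟨z, hz, h⟩ := mvt_comp hX hf hseg i
    rw [h, Finset.mul_sum]
    refine Finset.sum_le_sum fun j _ => ?_
    have hb := abs_le.1 (entry_le _ (hM z hz) i j)
    set a := fderiv ℝ f z (Pi.single j 1) i with ha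
    by_cases hij : i = j
    · subst hij
      have e : min (y i - x i) 0 * (y i - x i) = (min (y i - x i) 0) ^ 2 := by
        rcases le_total (y i - x i) 0 with h | h
        · rw [min_eq_left h]; ring
        · rw [min_eq_right h]; ring
      have : 2 * min (y i - x i) 0 * (a * (y i - x i)) = 2 * a * (min (y i - x i) 0) ^ 2 := by
        rw [← e]; ring
      rw [this]
      nlinarith [sq_nonneg (min (y i - x i) 0)]
    · have ha0 : 0 ≤ a := hcoop z (hseg hz) i j hij
      have hp : min (y i - x i) 0 ≤ 0 := min_le_right _ _
      have hq : min (y j - x j) 0 ≤ y j - x j := min_le_left _ _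
      set p := min (y i - x i) 0
      set q := min (y j - x j) 0
      have s1 : 2 * p * (a * (y j - x j)) ≤ 2 * p * (a * q) := by
        refine mul_le_mul_of_nonpos_left (mul_le_mul_of_nonneg_left hq ha0) (by linarith)
      have s2 : 2 * p * (a * q) ≤ a * (p ^ 2 + q ^ 2) := by
        nlinarith [mul_nonneg ha0 (sq_nonneg (p - q))]
      have s3 : a * (p ^ 2 + q ^ 2) ≤ M * (p ^ 2 + q ^ 2) :=
        mul_le_mul_of_nonneg_right hb.2 (by positivity)
      linarith
  refine (Finset.sum_le_sum fun i _ => h1 i).trans (le_of_eq ?_)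
  simp only [← Finset.mul_sum, Finset.sum_add_distrib, Finset.sum_const, Finset.card_univ,
    Fintype.card_fin, nsmul_eq_mul]
  ring

theorem segment_forall {n : ℕ} {x y : Fin n → ℝ} {U : Set (Fin n → ℝ)} :
    segment ℝ x y ⊆ U ↔ ∀ s ∈ Icc (0 : ℝ) 1, x + s • (y - x) ∈ U := by
  rw [segment_eq_image', Set.image_subset_iff]
  exact Iff.rfl

/-- One-sided nonincreasing criterion with integrating factor. -/
theorem gronwall_aux {a b C : ℝ} {V V' : ℝ → ℝ} (hc : ContinuousOn V (Icc a b))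
    (hd : ∀ t ∈ Ioo a b, HasDerivAt V (V' t) t) (hle : ∀ t ∈ Ioo a b, V' t ≤ C * V t) :
    AntitoneOn (fun t => Real.exp (-C * t) * V t) (Icc a b) := by
  have hD : ∀ t ∈ Ioo a b, HasDerivAt (fun t => Real.exp (-C * t) * V t)
      (Real.exp (-C * t) * (-C) * V t + Real.exp (-C * t) * V' t) t := by
    intro t ht
    have h1 : HasDerivAt (fun t : ℝ => Real.exp (-C * t)) (Real.exp (-C * t) * (-C)) t := by
      have := ((hasDerivAt_id t).const_mul (-C)).exp
      simpa using this
    exact h1.mul (hd t ht)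
  refine antitoneOn_of_deriv_nonpos (convex_Icc a b) ?_ ?_ ?_
  · exact ContinuousOn.mul (by fun_prop) hc
  · rw [interior_Icc]
    exact fun t ht => (hD t ht).differentiableAt.differentiableWithinAt
  · rw [interior_Icc]
    intro t ht
    rw [(hD t ht).deriv]
    have := mul_le_mul_of_nonneg_left (hle t ht) (Real.exp_pos (-C * t)).le
    linarith

/-- Weak monotonicity. -/
theorem weak_mono {n : ℕ} {X : Set (Fin n → ℝ)} (hX : IsOpen X) (hpc : pconvex X)
    {f : (Fin n → ℝ) → (Fin n → ℝ)} (hf : ContDiffOn ℝ 1 f X) (hcoop : coopVF f X)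
    {T : ℝ} {γ δ : ℝ → Fin n → ℝ}
    (hγ : IsSolOn f X (Set.Icc 0 T) γ) (hδ : IsSolOn f X (Set.Icc 0 T) δ)
    (h0 : γ 0 ≤ δ 0) : Icc 0 T ⊆ {t | γ t ≤ δ t} := by
  have cγ : ContinuousOn γ (Icc 0 T) := fun t ht => (hγ.2 t ht).continuousWithinAt
  have cδ : ContinuousOn δ (Icc 0 T) := fun t ht => (hδ.2 t ht).continuousWithinAt
  refine IsClosed.Icc_subset_of_forall_mem_nhdsWithin ?_ h0 ?_
  · have := isClosed_Icc.isClosed_le cγ cδ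
    convert this using 1
    ext t; simp [and_comm]
  rintro t₀ ⟨ht0, ht⟩
  have ht' : t₀ ∈ Icc 0 T := ⟨ht.1, ht.2.le⟩
  have hseg : segment ℝ (γ t₀) (δ t₀) ⊆ X := by
    rcases eq_or_lt_of_le (show γ t₀ ≤ δ t₀ from ht0) with h | h
    · rw [← h, segment_same]; simpa using hγ.1 t₀ ht'
    · exact hpc _ (hγ.1 t₀ ht') _ (hδ.1 t₀ ht') h
  have cD : ContinuousOn (fderiv ℝ f) X := hf.continuousOn_fderiv_of_isOpen hX le_rfl
  have hK : IsCompact (segment ℝ (γ t₀) (δ t₀)) := by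
    rw [segment_eq_image']
    exact isCompact_Icc.image (by fun_prop)
  obtain ⟨M, hM⟩ := hK.exists_bound_of_continuousOn (cD.mono hseg)
  let U : Set (Fin n → ℝ) := {x | x ∈ X ∧ ‖fderiv ℝ f x‖ < M + 1}
  have hU : IsOpen U := cD.norm.isOpen_inter_preimage hX (isOpen_Iio (a := M + 1))
  have hsegU : segment ℝ (γ t₀) (δ t₀) ⊆ U := fun x hx =>
    ⟨hseg hx, (hM x hx).trans_lt (by linarith)⟩
  have htube : ∀ᶠ t in 𝓝[Icc 0 T] t₀, segment ℝ (γ t) (δ t) ⊆ U := by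
    have h1 : {p : ℝ × ℝ | γ p.1 + p.2 • (δ p.1 - γ p.1) ∈ U} ∈
        𝓝[Icc 0 T] t₀ ×ˢ 𝓝ˢ (Icc (0 : ℝ) 1) := by
      refine isCompact_Icc.mem_prod_nhdsSet_of_forall fun s hs => ?_
      have t1 : Tendsto (fun p : ℝ × ℝ => γ p.1) (𝓝[Icc 0 T] t₀ ×ˢ 𝓝 s) (𝓝 (γ t₀)) :=
        Tendsto.comp (cγ t₀ ht') tendsto_fst
      have t2 : Tendsto (fun p : ℝ × ℝ => δ p.1) (𝓝[Icc 0 T] t₀ ×ˢ 𝓝 s) (𝓝 (δ t₀)) :=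
        Tendsto.comp (cδ t₀ ht') tendsto_fst
      have t3 : Tendsto (fun p : ℝ × ℝ => p.2) (𝓝[Icc 0 T] t₀ ×ˢ 𝓝 s) (𝓝 s) := tendsto_snd
      exact (t1.add (t3.smul (t2.sub t1))) (hU.mem_nhds (segment_forall.1 hsegU s hs))
    obtain ⟨A, hA, B, hB, hAB⟩ := mem_prod_iff.1 h1
    filter_upwards [hA] with t htA
    exact segment_forall.2 fun s hs => hAB (a := (t, s)) ⟨htA, subset_of_mem_nhdsSet hB hs⟩
  obtain ⟨ε, hε, hball⟩ := Metric.mem_nhdsWithin_iff.1 htube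
  obtain ⟨b, hb0, hb⟩ : ∃ b, t₀ < b ∧ b ≤ T ∧ b < t₀ + ε :=
    ⟨min T (t₀ + ε / 2), lt_min ht.2 (by linarith), min_le_left _ _,
      (min_le_right _ _).trans_lt (by linarith)⟩
  have hIcc : Icc t₀ b ⊆ Icc 0 T := Icc_subset_Icc ht.1 hb.1
  have hsegt : ∀ t ∈ Icc t₀ b, segment ℝ (γ t) (δ t) ⊆ U := by
    intro t htt
    refine hball ⟨?_, hIcc htt⟩
    rw [Metric.mem_ball, Real.dist_eq, abs_lt]
    constructor <;> linarith [htt.1, htt.2, hb.2]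
  have hcomp : ∀ t ∈ Ioo t₀ b, ∀ i, HasDerivAt (fun t => δ t i - γ t i)
      (f (δ t) i - f (γ t) i) t := by
    intro t htt i
    have hn : Icc 0 T ∈ 𝓝 t :=
      Icc_mem_nhds (ht.1.trans_lt htt.1) (htt.2.trans_le hb.1)
    have hm := hIcc (Ioo_subset_Icc_self htt)
    exact (hasDerivAt_pi.1 ((hδ.2 t hm).hasDerivAt hn) i).sub
      (hasDerivAt_pi.1 ((hγ.2 t hm).hasDerivAt hn) i)
  have cw : ∀ i, ContinuousOn (fun t => δ t i - γ t i) (Icc t₀ b) := fun i =>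
    ((continuousOn_pi.1 cδ i).sub (continuousOn_pi.1 cγ i)).mono hIcc
  have hanti := gronwall_aux (a := t₀) (b := b) (C := 2 * n * (M + 1))
    (V := fun t => ∑ i, (min (δ t i - γ t i) 0) ^ 2)
    (V' := fun t => ∑ i, 2 * min (δ t i - γ t i) 0 * (f (δ t) i - f (γ t) i))
    (continuousOn_finsetSum _ fun i _ => ((cw i).inf continuousOn_const).pow 2)
    (fun t htt => HasDerivAt.fun_sum fun i _ =>
      (hasDerivAt_negSq (δ t i - γ t i)).comp t (hcomp t htt i))
    (fun t htt => quad_est hX hf hcoop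
      (fun z hz => (hsegt t (Ioo_subset_Icc_self htt) hz).1)
      (fun z hz => (hsegt t (Ioo_subset_Icc_self htt) hz).2.le))
  have hres : ∀ t ∈ Icc t₀ b, γ t ≤ δ t := by
    intro t htt
    have h1 := hanti (left_mem_Icc.2 hb0.le) htt htt.1
    have hz : ∑ i, (min (δ t₀ i - γ t₀ i) 0) ^ 2 = 0 := by
      refine Finset.sum_eq_zero fun i _ => ?_
      rw [min_eq_right (sub_nonneg.2 (ht0 i))]; norm_num
    simp only [hz, mul_zero] at h1
    have h2 : ∑ i, (min (δ t i - γ t i) 0) ^ 2 ≤ 0 := by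
      by_contra hcon
      push Not at hcon
      linarith [mul_pos (Real.exp_pos (-(2 * n * (M + 1)) * t)) hcon]
    intro i
    have h3 := Finset.single_le_sum (f := fun i => (min (δ t i - γ t i) 0) ^ 2)
      (fun i _ => sq_nonneg _) (Finset.mem_univ i)
    have h4 : (min (δ t i - γ t i) 0) ^ 2 = 0 :=
      le_antisymm (h3.trans h2) (sq_nonneg _)
    have h5 := pow_eq_zero_iff (two_ne_zero) |>.1 h4
    have h6 := min_le_left (δ t i - γ t i) 0
    rw [h5] at h6
    linarith
  filter_upwards [Ioo_mem_nhdsGT hb0] with t htt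
  exact hres t (Ioo_subset_Icc_self htt)

/-- strong monotonicity of cooperative irreducible systems. -/
theorem stmt_1 {n : ℕ} {X : Set (Fin n → ℝ)} (hX : IsOpen X) (hpc : pconvex X)
    {f : (Fin n → ℝ) → (Fin n → ℝ)} (hf : ContDiffOn ℝ 1 f X) (hcoop : coopVF f X)
    (hirr : ∀ x ∈ X, matIrred (jacMat f x))
    {T : ℝ} (hT : 0 ≤ T) {γ δ : ℝ → Fin n → ℝ}
    (hγ : IsSolOn f X (Set.Icc 0 T) γ) (hδ : IsSolOn f X (Set.Icc 0 T) δ)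
    (h0 : γ 0 < δ 0) :
    ∀ t ∈ Set.Ioc (0 : ℝ) T, strLt (γ t) (δ t) := by
  have hw := weak_mono hX hpc hf hcoop hγ hδ h0.le
  have cγ : ContinuousOn γ (Icc 0 T) := fun t ht => (hγ.2 t ht).continuousWithinAt
  have cδ : ContinuousOn δ (Icc 0 T) := fun t ht => (hδ.2 t ht).continuousWithinAt
  have hseg : ∀ t ∈ Icc 0 T, segment ℝ (γ t) (δ t) ⊆ X := by
    intro t ht
    rcases eq_or_lt_of_le (show γ t ≤ δ t from hw ht) with h | h
    · rw [← h, segment_same]; simpa using hγ.1 t ht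
    · exact hpc _ (hγ.1 t ht) _ (hδ.1 t ht) h
  have cD : ContinuousOn (fderiv ℝ f) X := hf.continuousOn_fderiv_of_isOpen hX le_rfl
  obtain ⟨M, hM⟩ : ∃ M, ∀ t ∈ Icc 0 T, ∀ z ∈ segment ℝ (γ t) (δ t), ‖fderiv ℝ f z‖ ≤ M := by
    have cφ : ContinuousOn (fun p : ℝ × ℝ => γ p.1 + p.2 • (δ p.1 - γ p.1))
        (Icc 0 T ×ˢ Icc (0 : ℝ) 1) := by
      have c1 : ContinuousOn (fun p : ℝ × ℝ => γ p.1) (Icc 0 T ×ˢ Icc (0 : ℝ) 1) :=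
        cγ.comp continuousOn_fst fun p hp => hp.1
      have c2 : ContinuousOn (fun p : ℝ × ℝ => δ p.1) (Icc 0 T ×ˢ Icc (0 : ℝ) 1) :=
        cδ.comp continuousOn_fst fun p hp => hp.1
      exact c1.add (continuousOn_snd.smul (c2.sub c1))
    obtain ⟨M, hM⟩ := (isCompact_Icc.prod isCompact_Icc).exists_bound_of_continuousOn
      (cD.comp cφ fun p hp => segment_forall.1 (hseg p.1 hp.1) p.2 hp.2)
    refine ⟨M, fun t ht => ?_⟩
    exact (segment_forall (U := {z | ‖fderiv ℝ f z‖ ≤ M})).2 fun s hs => hM (t, s) ⟨ht, hs⟩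
  -- `exp (M t) * w i t` is nondecreasing
  have hanti : ∀ i, AntitoneOn (fun t => Real.exp (-(-M) * t) * (γ t i - δ t i)) (Icc 0 T) := by
    intro i
    refine gronwall_aux (V' := fun t => f (γ t) i - f (δ t) i)
      ((continuousOn_pi.1 cγ i).sub (continuousOn_pi.1 cδ i)) ?_ ?_
    · intro t htt
      have hn : Icc 0 T ∈ 𝓝 t := Icc_mem_nhds htt.1 htt.2
      have hm := Ioo_subset_Icc_self htt
      exact (hasDerivAt_pi.1 ((hγ.2 t hm).hasDerivAt hn) i).sub
        (hasDerivAt_pi.1 ((hδ.2 t hm).hasDerivAt hn) i)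
    · intro t htt
      have hm := Ioo_subset_Icc_self htt
      have := diff_lower hX hf hcoop (hseg t hm) (hw hm) i (fun _ => hM t hm)
      linarith
  have hzero : ∀ i, ∀ t ∈ Icc 0 T, δ t i = γ t i → ∀ s ∈ Icc 0 t, δ s i = γ s i := by
    intro i t ht hti s hs
    have hsT : s ∈ Icc 0 T := ⟨hs.1, hs.2.trans ht.2⟩
    have h1 := hanti i hsT ht hs.2
    simp only [hti, sub_self, mul_zero] at h1
    refine le_antisymm ?_ (hw hsT i)
    by_contra hcon
    push Not at hcon
    nlinarith [mul_pos (Real.exp_pos (-(-M) * s)) (sub_pos.2 hcon)]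
  intro t ht
  have ht' : t ∈ Icc 0 T := ⟨ht.1.le, ht.2⟩
  by_contra hcon
  obtain ⟨k, hk⟩ : ∃ k, ¬ γ t k < δ t k := by simpa [strLt] using hcon
  let S : Set (Fin n) := {i | δ t i = γ t i}
  have hSk : k ∈ S := le_antisymm (not_lt.1 hk) (hw ht' k)
  have hSu : S ≠ Set.univ := by
    intro hS
    apply h0.ne
    ext i
    have hi : i ∈ S := hS ▸ Set.mem_univ i
    exact (hzero i t ht' hi 0 ⟨le_rfl, ht.1.le⟩).symm
  obtain ⟨i, hi, j, hj, hij⟩ := hirr (γ t) (hγ.1 t ht') S ⟨k, hSk⟩ hSu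
  have hne : i ≠ j := fun h => hj (h ▸ hi)
  have hpos : 0 < fderiv ℝ f (γ t) (Pi.single j 1) i :=
    lt_of_le_of_ne (hcoop _ (hγ.1 t ht') i j hne) (Ne.symm hij)
  have hwj : 0 < δ t j - γ t j := sub_pos.2 (lt_of_le_of_ne (hw ht' j) (Ne.symm hj))
  have hi' : δ t i = γ t i := hi
  -- the derivative of `w i` at `t` vanishes
  have hder : f (δ t) i - f (γ t) i = 0 := by
    have hsub : Icc 0 t ⊆ Icc 0 T := Icc_subset_Icc le_rfl ht.2
    have d1 : HasDerivWithinAt (fun s => δ s i - γ s i) (f (δ t) i - f (γ t) i) (Icc 0 t) t :=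
      (hasDerivWithinAt_pi.1 ((hδ.2 t ht').mono hsub) i).sub
        (hasDerivWithinAt_pi.1 ((hγ.2 t ht').mono hsub) i)
    have d2 : HasDerivWithinAt (fun s => δ s i - γ s i) 0 (Icc 0 t) t := by
      refine (hasDerivWithinAt_const t (Icc 0 t) (0 : ℝ)).congr ?_ ?_
      · exact fun s hs => sub_eq_zero.2 (hzero i t ht' hi' s hs)
      · exact sub_eq_zero.2 hi'
    exact UniqueDiffWithinAt.eq_deriv _
      (uniqueDiffOn_Icc ht.1 t ⟨ht.1.le, le_rfl⟩) d1 d2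
  -- along the segment, `f i` is constant
  set v : Fin n → ℝ := δ t - γ t with hv
  have hv0 : 0 ≤ v := sub_nonneg.2 (hw ht')
  have hvi : v i = 0 := sub_eq_zero.2 hi'
  have hend : γ t + (1 : ℝ) • v = δ t := by simp [hv]
  have hconst : ∀ s ∈ Icc (0 : ℝ) 1, f (γ t + s • v) i = f (γ t) i := by
    intro s hs
    have hmem : γ t + s • v ∈ segment ℝ (γ t) (δ t) :=
      segment_forall.1 (subset_refl _) s hs
    have hc := convex_segment (𝕜 := ℝ) (γ t) (δ t)
    have s1 := (hc.segment_subset (left_mem_segment ℝ _ _) hmem).trans (hseg t ht')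
    have s2 := (hc.segment_subset hmem (right_mem_segment ℝ _ _)).trans (hseg t ht')
    have l1 : γ t ≤ γ t + s • v := le_add_of_nonneg_right (smul_nonneg hs.1 hv0)
    have l2 : γ t + s • v ≤ δ t := by
      rw [← hend]
      exact add_le_add le_rfl (smul_le_smul_of_nonneg_right hs.2 hv0)
    have e1 : (γ t + s • v) i = γ t i := by simp [hvi]
    have r1 := diff_lower hX hf hcoop s1 l1 (M := 0) i (fun h => absurd e1 h)
    have r2 := diff_lower hX hf hcoop s2 l2 (M := 0) i (fun h => absurd (hi'.trans e1.symm) h)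
    linarith
  have dF : HasFDerivAt f (fderiv ℝ f (γ t)) (γ t) :=
    ((hf.differentiableOn (by norm_num)).differentiableAt
      (hX.mem_nhds (hγ.1 t ht'))).hasFDerivAt
  have dL : HasDerivAt (fun s : ℝ => γ t + s • v) v 0 := by
    simpa using ((hasDerivAt_id (0 : ℝ)).smul_const v).const_add (γ t)
  have dF' : HasFDerivAt f (fderiv ℝ f (γ t)) (γ t + (0 : ℝ) • v) := by simpa using dF
  have dg := (hasDerivAt_pi.1 (dF'.comp_hasDerivAt (0 : ℝ) dL) i).hasDerivWithinAt
    (s := Icc (0 : ℝ) 1)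
  have dg0 : HasDerivWithinAt (fun s : ℝ => (f ∘ fun s : ℝ => γ t + s • v) s i) 0
      (Icc (0 : ℝ) 1) 0 := by
    refine (hasDerivWithinAt_const 0 (Icc 0 1) (f (γ t) i)).congr ?_ ?_
    · exact fun s hs => hconst s hs
    · exact hconst 0 ⟨le_rfl, zero_le_one⟩
  have hfin : fderiv ℝ f (γ t) v i = 0 :=
    UniqueDiffWithinAt.eq_deriv _
      (uniqueDiffOn_Icc zero_lt_one 0 ⟨le_rfl, zero_le_one⟩) dg dg0
  have e : v = ∑ l, v l • (Pi.single l 1 : Fin n → ℝ) := by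
    ext k
    simp [Finset.sum_apply, Pi.single_apply]
  rw [e, map_sum, Finset.sum_apply] at hfin
  simp only [map_smul, Pi.smul_apply, smul_eq_mul] at hfin
  have hnn : ∀ l ∈ Finset.univ, 0 ≤ v l * fderiv ℝ f (γ t) (Pi.single l 1) i := by
    intro l _
    by_cases hl : i = l
    · rw [← hl, hvi, zero_mul]
    · exact mul_nonneg (hv0 l) (hcoop _ (hγ.1 t ht') i l hl)
  have hz := (Finset.sum_eq_zero_iff_of_nonneg hnn).1 hfin j (Finset.mem_univ j)
  have : 0 < v j * fderiv ℝ f (γ t) (Pi.single j 1) i := mul_pos hwj hpos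
  linarith
end
end

section
/- Let X ⊆ ℝⁿ be an open p-convex set and let f : X → ℝⁿ be a C¹ cooperative irreducible vector field. Assume that for every x ∈ X the (unique, by C¹ regularity of f) maximal solution γₓ of ẋ = f(x) with γₓ(0) = x is defined on all of [0,∞) and its image has compact closure contained in X. Then there exists an open dense set Y ⊆ X such that for every x ∈ Y the ω-limit set of γₓ is a singleton. -/
open Set Filter Topology

noncomputable section

section
lemma lip_on_compact {n : ℕ} {X : Set (Fin n → ℝ)} (hX : IsOpen X)
    {f : (Fin n → ℝ) → (Fin n → ℝ)} (hf : ContDiffOn ℝ 1 f X) {K : Set (Fin n → ℝ)}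
    (hK : IsCompact K) (hKX : K ⊆ X) : ∃ L, LipschitzOnWith L f K := by
  apply LocallyLipschitzOn.exists_lipschitzOnWith_of_compact hK
  intro x hx
  have h := (hf.contDiffAt (hX.mem_nhds (hKX hx))).exists_lipschitzOnWith
  obtain ⟨L, t, ht, h⟩ := h
  exact ⟨L, t, mem_nhdsWithin_of_mem_nhds ht, h⟩

lemma IsSolOn.contOn {n : ℕ} {X : Set (Fin n → ℝ)} {f : (Fin n → ℝ) → (Fin n → ℝ)} {I : Set ℝ}
    {x : ℝ → Fin n → ℝ} (h : IsSolOn f X I x) : ContinuousOn x I :=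
  fun t ht => (h.2 t ht).continuousWithinAt

lemma IsSolOn.hasDerivAt' {n : ℕ} {X : Set (Fin n → ℝ)} {f : (Fin n → ℝ) → (Fin n → ℝ)}
    {x : ℝ → Fin n → ℝ} (h : IsSolOn f X (Ici 0) x) {t : ℝ} (ht : 0 < t) :
    HasDerivAt x (f (x t)) t :=
  (h.2 t ht.le).hasDerivAt (Ici_mem_nhds ht)

lemma sol_close {n : ℕ} {X : Set (Fin n → ℝ)} (hX : IsOpen X)
    {f : (Fin n → ℝ) → (Fin n → ℝ)} (hf : ContDiffOn ℝ 1 f X) {x : ℝ → Fin n → ℝ}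
    (hx : IsSolOn f X (Ici 0) x) (T : ℝ) {ε : ℝ} (hε : 0 < ε) :
    ∃ δ > 0, ∀ η : ℝ → Fin n → ℝ, IsSolOn f X (Ici 0) η → dist (η 0) (x 0) < δ →
      ∀ t ∈ Icc 0 T, dist (η t) (x t) < ε := by
  have hxc : IsCompact (x '' Icc 0 T) :=
    isCompact_Icc.image_of_continuousOn (hx.contOn.mono Icc_subset_Ici_self)
  have hxX : x '' Icc 0 T ⊆ X := by
    rintro _ ⟨t, ht, rfl⟩; exact hx.1 t ht.1
  obtain ⟨ρ, hρ, hρX⟩ := hxc.exists_cthickening_subset_open hX hxX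
  set r := min ρ ε with hr
  have hr0 : 0 < r := lt_min hρ hε
  obtain ⟨L, hL⟩ := lip_on_compact hX hf (hxc.cthickening (r := ρ)) hρX
  refine ⟨r / 2 * Real.exp (-(L * |T|)), by positivity, ?_⟩
  intro η hη h0
  suffices H : ∀ t ∈ Icc 0 T, dist (η t) (x t) < r from
    fun t ht => (H t ht).trans_le (min_le_right _ _)
  by_contra hcon
  push Not at hcon
  have hcd : ContinuousOn (fun t => dist (η t) (x t)) (Icc 0 T) :=
    continuous_dist.comp_continuousOn
      ((hη.contOn.mono Icc_subset_Ici_self).prodMk (hx.contOn.mono Icc_subset_Ici_self))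
  have hZc : IsCompact (Icc 0 T ∩ (fun t => dist (η t) (x t)) ⁻¹' Ici r) :=
    isCompact_Icc.of_isClosed_subset (hcd.preimage_isClosed_of_isClosed isClosed_Icc isClosed_Ici)
      inter_subset_left
  obtain ⟨t1, ⟨ht1, hd1⟩, hmin⟩ := hZc.exists_isLeast
    (by obtain ⟨t, ht, h⟩ := hcon; exact ⟨t, ht, h⟩)
  have hlt : ∀ t ∈ Ico 0 t1, dist (η t) (x t) < r := by
    intro t ht
    by_contra h
    have := hmin ⟨⟨ht.1, ht.2.le.trans ht1.2⟩, not_lt.1 h⟩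
    exact absurd ht.2 (not_lt.2 this)
  have key := dist_le_of_trajectories_ODE_of_mem (v := fun _ => f)
    (s := fun _ => Metric.cthickening ρ (x '' Icc 0 T)) (K := L) (f := η) (g := x)
    (a := 0) (b := t1) (δ := r / 2 * Real.exp (-(L * |T|))) (fun t _ => hL)
    (hη.contOn.mono Icc_subset_Ici_self)
    (fun t ht => (hη.2 t ht.1).mono (Ici_subset_Ici.2 ht.1))
    (fun t ht => Metric.mem_cthickening_of_dist_le _ (x t) _ _
      ⟨t, ⟨ht.1, ht.2.le.trans ht1.2⟩, rfl⟩ ((hlt t ht).le.trans (min_le_left _ _)))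
    (hx.contOn.mono Icc_subset_Ici_self)
    (fun t ht => (hx.2 t ht.1).mono (Ici_subset_Ici.2 ht.1))
    (fun t ht => Metric.self_subset_cthickening _
      ⟨t, ⟨ht.1, ht.2.le.trans ht1.2⟩, rfl⟩) h0.le t1 ⟨ht1.1, le_rfl⟩
  have h2 : r / 2 * Real.exp (-(L * |T|)) * Real.exp (L * (t1 - 0)) ≤ r / 2 := by
    rw [mul_assoc, ← Real.exp_add]
    have : Real.exp (-(L * |T|) + L * (t1 - 0)) ≤ 1 := by
      rw [Real.exp_le_one_iff]
      have : (L : ℝ) * t1 ≤ L * |T| :=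
        mul_le_mul_of_nonneg_left (ht1.2.trans (le_abs_self T)) L.2
      linarith
    nlinarith
  have : r ≤ dist (η t1) (x t1) := hd1
  linarith

lemma sol_unique {n : ℕ} {X : Set (Fin n → ℝ)} (hX : IsOpen X)
    {f : (Fin n → ℝ) → (Fin n → ℝ)} (hf : ContDiffOn ℝ 1 f X) {x y : ℝ → Fin n → ℝ}
    (hx : IsSolOn f X (Ici 0) x) (hy : IsSolOn f X (Ici 0) y) (h0 : y 0 = x 0) {t : ℝ}
    (ht : 0 ≤ t) : y t = x t := by
  by_contra hne
  obtain ⟨δ, hδ, h⟩ := sol_close hX hf hx t (dist_pos.2 hne)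
  exact lt_irrefl _ (h y hy (by simpa [h0] using hδ) t ⟨ht, le_rfl⟩)

lemma exp_growth {g g' : ℝ → ℝ} {c a b : ℝ} (hab : a ≤ b) (hc : ContinuousOn g (Icc a b))
    (hd : ∀ t ∈ Ioo a b, HasDerivAt g (g' t) t) (h : ∀ t ∈ Ioo a b, c * g t ≤ g' t) :
    g a * Real.exp (c * (b - a)) ≤ g b := by
  have hd2 : ∀ t ∈ Ioo a b, HasDerivAt (fun t => g t * Real.exp (-(c * t)))
      (g' t * Real.exp (-(c * t)) + g t * (Real.exp (-(c * t)) * -(c * 1))) t := by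
    intro t ht
    exact (hd t ht).mul (((hasDerivAt_id t).const_mul c).neg.exp)
  have hm : MonotoneOn (fun t => g t * Real.exp (-(c * t))) (Icc a b) := by
    apply monotoneOn_of_deriv_nonneg (convex_Icc a b)
    · exact hc.mul (by fun_prop)
    · rw [interior_Icc]
      exact fun t ht => (hd2 t ht).differentiableAt.differentiableWithinAt
    · rw [interior_Icc]
      intro t ht
      rw [(hd2 t ht).deriv]
      have := h t ht
      have e := Real.exp_pos (-(c * t))
      nlinarith
  have := hm ⟨le_rfl, hab⟩ ⟨hab, le_rfl⟩ hab
  simp only at this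
  calc g a * Real.exp (c * (b - a)) = g a * Real.exp (-(c * a)) * Real.exp (c * b) := by
        rw [mul_assoc, ← Real.exp_add]; ring_nf
    _ ≤ g b * Real.exp (-(c * b)) * Real.exp (c * b) := by gcongr
    _ = g b := by rw [mul_assoc, ← Real.exp_add]; simp

lemma fderiv_coord {n : ℕ} (A : (Fin n → ℝ) →L[ℝ] (Fin n → ℝ)) (v : Fin n → ℝ) (i : Fin n) :
    A v i = ∑ j, v j * A (Pi.single j 1) i := by
  conv_lhs => rw [pi_eq_sum_univ' v]
  simp [map_sum, Finset.sum_apply]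

lemma hasDerivAt_seg {n : ℕ} {X : Set (Fin n → ℝ)} (hX : IsOpen X)
    {f : (Fin n → ℝ) → (Fin n → ℝ)} (hf : ContDiffOn ℝ 1 f X) (a v : Fin n → ℝ) (s : ℝ)
    (hs : a + s • v ∈ X) (i : Fin n) :
    HasDerivAt (fun s : ℝ => f (a + s • v) i) (fderiv ℝ f (a + s • v) v i) s := by
  have h1 : HasFDerivAt f (fderiv ℝ f (a + s • v)) (a + s • v) :=
    ((hf.contDiffAt (hX.mem_nhds hs)).differentiableAt (by simp)).hasFDerivAt
  have h2 : HasDerivAt (fun s : ℝ => a + s • v) v s := by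
    simpa using ((hasDerivAt_id s).smul_const v).const_add a
  exact hasDerivAt_pi.1 (h1.comp_hasDerivAt s h2) i

lemma seg_mem {n : ℕ} {X : Set (Fin n → ℝ)} {a b : Fin n → ℝ} (h : segment ℝ a b ⊆ X) {s : ℝ}
    (hs : s ∈ Icc (0 : ℝ) 1) : a + s • (b - a) ∈ X := by
  apply h
  rw [segment_eq_image']
  exact ⟨s, hs, rfl⟩

lemma mvt_lower {n : ℕ} {X : Set (Fin n → ℝ)} (hX : IsOpen X)
    {f : (Fin n → ℝ) → (Fin n → ℝ)} (hf : ContDiffOn ℝ 1 f X) {a b : Fin n → ℝ} (hab : a ≤ b)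
    (hseg : segment ℝ a b ⊆ X) (u c : Fin n → ℝ)
    (h : ∀ z ∈ segment ℝ a b, ∀ j, c j ≤ ∑ i, u i * fderiv ℝ f z (Pi.single j 1) i) :
    ∑ j, c j * (b j - a j) ≤ ∑ i, u i * (f b i - f a i) := by
  set v := b - a with hv
  have hd : ∀ s ∈ Icc (0 : ℝ) 1, HasDerivAt (fun s : ℝ => ∑ i, u i * f (a + s • v) i)
      (∑ i, u i * fderiv ℝ f (a + s • v) v i) s := by
    intro s hs
    apply HasDerivAt.fun_sum
    intro i _
    exact (hasDerivAt_seg hX hf a v s (seg_mem hseg hs) i).const_mul _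
  obtain ⟨s, hs, he⟩ := exists_hasDerivAt_eq_slope (fun s : ℝ => ∑ i, u i * f (a + s • v) i)
    (fun s => ∑ i, u i * fderiv ℝ f (a + s • v) v i) (zero_lt_one)
    (fun s hs => (hd s hs).continuousAt.continuousWithinAt)
    (fun s hs => hd s (Ioo_subset_Icc_self hs))
  have e1 : a + (1 : ℝ) • v = b := by simp [hv]
  have e0 : a + (0 : ℝ) • v = a := by simp
  rw [e1, e0] at he
  simp only [sub_zero, div_one, ← Finset.sum_sub_distrib, ← mul_sub] at he
  rw [← he]
  have hz : a + s • v ∈ segment ℝ a b := by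
    rw [segment_eq_image']; exact ⟨s, Ioo_subset_Icc_self hs, rfl⟩
  have : ∑ i, u i * fderiv ℝ f (a + s • v) v i
      = ∑ j, (∑ i, u i * fderiv ℝ f (a + s • v) (Pi.single j 1) i) * v j := by
    simp_rw [fderiv_coord (fderiv ℝ f (a + s • v)) v, Finset.mul_sum, Finset.sum_mul]
    rw [Finset.sum_comm]
    refine Finset.sum_congr rfl fun j _ => Finset.sum_congr rfl fun i _ => by ring
  rw [this]
  apply Finset.sum_le_sum
  intro j _
  exact mul_le_mul_of_nonneg_right (h _ hz j) (sub_nonneg.2 (hab j))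
end

section
lemma seg_sub {n : ℕ} {X : Set (Fin n → ℝ)} (hpc : pconvex X) {a b : Fin n → ℝ} (ha : a ∈ X)
    (hb : b ∈ X) (hab : a ≤ b) : segment ℝ a b ⊆ X := by
  rcases hab.eq_or_lt with rfl | h
  · simpa using ha
  · exact hpc a ha b hb h

/-- Lower exponential estimate for every coordinate of the difference of ordered solutions. -/
lemma diag_lower {n : ℕ} {X : Set (Fin n → ℝ)} (hX : IsOpen X) (hpc : pconvex X)
    {f : (Fin n → ℝ) → (Fin n → ℝ)} (hf : ContDiffOn ℝ 1 f X) (hcoop : coopVF f X)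
    {x y : ℝ → Fin n → ℝ} (hx : IsSolOn f X (Ici 0) x) (hy : IsSolOn f X (Ici 0) y) {T : ℝ}
    (hle : ∀ t ∈ Icc 0 T, x t ≤ y t) :
    ∃ L : ℝ, ∀ i : Fin n, ∀ s t : ℝ, 0 ≤ s → s ≤ t → t ≤ T →
      (y s i - x s i) * Real.exp (-L * (t - s)) ≤ y t i - x t i := by
  have hcont : ContinuousOn (fun p : ℝ × ℝ => x p.1 + p.2 • (y p.1 - x p.1))
      (Icc 0 T ×ˢ Icc 0 1) := by
    have h1 : ContinuousOn (fun p : ℝ × ℝ => x p.1) (Icc 0 T ×ˢ Icc (0:ℝ) 1) :=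
      hx.contOn.comp continuous_fst.continuousOn (fun p hp => hp.1.1)
    have h2 : ContinuousOn (fun p : ℝ × ℝ => y p.1) (Icc 0 T ×ˢ Icc (0:ℝ) 1) :=
      hy.contOn.comp continuous_fst.continuousOn (fun p hp => hp.1.1)
    exact h1.add (continuous_snd.continuousOn.smul (h2.sub h1))
  have hM : IsCompact ((fun p : ℝ × ℝ => x p.1 + p.2 • (y p.1 - x p.1)) ''
      (Icc 0 T ×ˢ Icc (0:ℝ) 1)) :=
    (isCompact_Icc.prod isCompact_Icc).image_of_continuousOn hcont
  have hsegX : ∀ t ∈ Icc 0 T, segment ℝ (x t) (y t) ⊆ X := fun t ht =>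
    seg_sub hpc (hx.1 t ht.1) (hy.1 t ht.1) (hle t ht)
  have hMX : ((fun p : ℝ × ℝ => x p.1 + p.2 • (y p.1 - x p.1)) ''
      (Icc 0 T ×ˢ Icc (0:ℝ) 1)) ⊆ X := by
    rintro _ ⟨p, hp, rfl⟩
    exact seg_mem (hsegX _ hp.1) hp.2
  have hfd : ContinuousOn (fun z => fderiv ℝ f z) X := hf.continuousOn_fderiv_of_isOpen hX le_rfl
  obtain ⟨L, hL⟩ := hM.exists_bound_of_continuousOn (hfd.mono hMX)
  refine ⟨L, fun i s t hs hst htT => ?_⟩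
  refine exp_growth (g := fun t => y t i - x t i) (g' := fun t => f (y t) i - f (x t) i) hst
    ?_ ?_ ?_
  · have h1 := continuousOn_pi.1 hx.contOn i
    have h2 := continuousOn_pi.1 hy.contOn i
    exact (h2.sub h1).mono fun r hr => hs.trans hr.1
  · intro r hr
    have hr0 : 0 < r := hs.trans_lt hr.1
    exact (hasDerivAt_pi.1 (hy.hasDerivAt' hr0) i).sub (hasDerivAt_pi.1 (hx.hasDerivAt' hr0) i)
  · intro r hr
    have hrT : r ∈ Icc 0 T := ⟨hs.trans hr.1.le, hr.2.le.trans htT⟩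
    have key := mvt_lower hX hf (hle r hrT) (hsegX r hrT) (Pi.single i 1) (Pi.single i (-L)) ?_
    · simpa [Pi.single_apply] using key
    · intro z hz j
      have hzX := hsegX r hrT hz
      simp only [Pi.single_apply, ite_mul, one_mul, zero_mul, Finset.sum_ite_eq', Finset.mem_univ,
        if_true]
      split_ifs with hji
      · subst hji
        have hzM : ‖fderiv ℝ f z‖ ≤ L := by
          apply hL
          rw [segment_eq_image'] at hz
          obtain ⟨s, hs, rfl⟩ := hz
          exact ⟨(r, s), ⟨hrT, hs⟩, rfl⟩
        have h1 : ‖fderiv ℝ f z (Pi.single j 1) j‖ ≤ L := by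
          calc ‖fderiv ℝ f z (Pi.single j 1) j‖ ≤ ‖fderiv ℝ f z (Pi.single j 1)‖ :=
                norm_le_pi_norm _ _
            _ ≤ ‖fderiv ℝ f z‖ * ‖(Pi.single j 1 : Fin n → ℝ)‖ := ContinuousLinearMap.le_opNorm _ _
            _ ≤ L := by simpa [Pi.norm_single] using hzM
        rw [Real.norm_eq_abs] at h1
        have := neg_abs_le (fderiv ℝ f z (Pi.single j 1) j)
        convert (neg_le_neg h1).trans this using 1
      · exact hcoop z hzX i j (fun h => hji h.symm)

lemma strict_order {n : ℕ} {X : Set (Fin n → ℝ)} (hX : IsOpen X) (hpc : pconvex X)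
    {f : (Fin n → ℝ) → (Fin n → ℝ)} (hf : ContDiffOn ℝ 1 f X) (hcoop : coopVF f X)
    {x y : ℝ → Fin n → ℝ} (hx : IsSolOn f X (Ici 0) x) (hy : IsSolOn f X (Ici 0) y)
    (h0 : strLt (x 0) (y 0)) {t : ℝ} (ht : 0 ≤ t) : strLt (x t) (y t) := by
  have hc : ∀ i, ContinuousOn (fun t => y t i - x t i) (Ici 0) := fun i =>
    (continuousOn_pi.1 hy.contOn i).sub (continuousOn_pi.1 hx.contOn i)
  by_contra hcon
  have hZc : IsCompact (⋃ i, (Icc 0 t ∩ (fun t => y t i - x t i) ⁻¹' Iic 0)) := by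
    refine isCompact_iUnion fun i => ?_
    exact isCompact_Icc.of_isClosed_subset
      (((hc i).mono Icc_subset_Ici_self).preimage_isClosed_of_isClosed isClosed_Icc isClosed_Iic)
      inter_subset_left
  obtain ⟨t1, ht1, hmin⟩ := hZc.exists_isLeast (by
    simp only [strLt, not_forall, not_lt] at hcon
    obtain ⟨i, hi⟩ := hcon
    exact ⟨t, mem_iUnion.2 ⟨i, ⟨ht, le_rfl⟩, sub_nonpos.2 hi⟩⟩)
  obtain ⟨i, ht1, hi⟩ := mem_iUnion.1 ht1
  have hlt : ∀ s, 0 ≤ s → s < t1 → ∀ j, 0 < y s j - x s j := by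
    intro s hs hst j
    by_contra h
    exact absurd hst (not_lt.2 (hmin (mem_iUnion.2 ⟨j, ⟨hs, hst.le.trans ht1.2⟩, not_lt.1 h⟩)))
  have hle : ∀ s ∈ Icc 0 t1, x s ≤ y s := by
    intro s hs
    rcases hs.2.lt_or_eq with h | rfl
    · exact fun j => (sub_pos.1 (hlt s hs.1 h j)).le
    · intro j
      by_contra hj
      have hj' : y s j - x s j < 0 := by linarith [not_le.1 hj]
      have := intermediate_value_Ioo' hs.1 ((hc j).mono Icc_subset_Ici_self)
      obtain ⟨r, hr, hr0⟩ := this ⟨hj', sub_pos.2 (h0 j)⟩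
      have := hlt r hr.1.le hr.2 j
      simp only at hr0
      linarith
  obtain ⟨L, hL⟩ := diag_lower hX hpc hf hcoop hx hy hle
  have h1 := hL i 0 t1 le_rfl ht1.1 le_rfl
  have h2 : 0 < (y 0 i - x 0 i) * Real.exp (-L * (t1 - 0)) :=
    mul_pos (sub_pos.2 (h0 i)) (Real.exp_pos _)
  have : y t1 i - x t1 i ≤ 0 := hi
  linarith

lemma strong_order {n : ℕ} {X : Set (Fin n → ℝ)} (hX : IsOpen X) (hpc : pconvex X)
    {f : (Fin n → ℝ) → (Fin n → ℝ)} (hf : ContDiffOn ℝ 1 f X) (hcoop : coopVF f X)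
    (hirr : ∀ x ∈ X, matIrred (jacMat f x))
    {x y : ℝ → Fin n → ℝ} (hx : IsSolOn f X (Ici 0) x) (hy : IsSolOn f X (Ici 0) y)
    (hle : ∀ t, 0 ≤ t → x t ≤ y t) (h0 : x 0 ≠ y 0) {T : ℝ} (hT : 0 < T) :
    strLt (x T) (y T) := by
  classical
  obtain ⟨L, hL⟩ := diag_lower (T := T) hX hpc hf hcoop hx hy (fun t ht => hle t ht.1)
  by_contra hcon
  simp only [strLt, not_forall, not_lt] at hcon
  obtain ⟨i0, hi0⟩ := hcon
  let S : ℝ → Finset (Fin n) := fun t => Finset.univ.filter fun i => y t i = x t i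
  have hmono : ∀ s t, 0 ≤ s → s ≤ t → t ≤ T → S t ⊆ S s := by
    intro s t hs hst ht i hi
    simp only [S, Finset.mem_filter, Finset.mem_univ, true_and] at hi ⊢
    have h1 := hL i s t hs hst ht
    have h2 := hle s hs i
    by_contra hne
    have : 0 < (y s i - x s i) * Real.exp (-L * (t - s)) :=
      mul_pos (sub_pos.2 (lt_of_le_of_ne h2 (Ne.symm hne))) (Real.exp_pos _)
    rw [hi] at h1
    linarith
  have hi0T : i0 ∈ S T := by
    simp only [S, Finset.mem_filter, Finset.mem_univ, true_and]
    exact le_antisymm hi0 (hle T hT.le i0)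
  -- choose a time in `[0,T)` with the fewest zero coordinates
  have hex : ∃ k, ∃ t, 0 ≤ t ∧ t < T ∧ (S t).card = k := ⟨_, 0, le_rfl, hT, rfl⟩
  obtain ⟨t1, ht1, ht1T, hk⟩ := Nat.find_spec hex
  have hmin : ∀ t, 0 ≤ t → t < T → (S t1).card ≤ (S t).card := by
    intro t ht htT
    rw [hk]
    exact Nat.find_min' hex ⟨t, ht, htT, rfl⟩
  have hconst : ∀ t, t1 ≤ t → t < T → S t = S t1 := fun t ht htT =>
    Finset.eq_of_subset_of_card_le (hmono t1 t ht1 ht htT.le) (hmin t (ht1.trans ht) htT)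
  have hne : ((S t1 : Finset (Fin n)) : Set (Fin n)) ≠ univ := by
    intro h
    apply h0
    have hsub := hmono 0 t1 le_rfl ht1 ht1T.le
    funext i
    have : i ∈ S 0 := hsub (by
      have : i ∈ ((S t1 : Finset (Fin n)) : Set (Fin n)) := by rw [h]; trivial
      exact_mod_cast this)
    simp only [S, Finset.mem_filter, Finset.mem_univ, true_and] at this
    exact this.symm
  set t2 := (t1 + T) / 2 with ht2
  have ht12 : t1 < t2 := by rw [ht2]; linarith
  have ht2T : t2 < T := by rw [ht2]; linarith
  have ht20 : 0 < t2 := ht1.trans_lt ht12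
  obtain ⟨i, hi, j, hj, hij⟩ := hirr (x t2) (hx.1 t2 ht20.le) (S t1)
    ⟨i0, by exact_mod_cast hmono t1 T ht1 ht1T.le le_rfl hi0T⟩ hne
  have hi : i ∈ S t1 := by exact_mod_cast hi
  have hj : j ∉ S t1 := by exact_mod_cast hj
  have hzero : ∀ t, t1 < t → t < T → y t i - x t i = 0 := by
    intro t h1 h2
    have : i ∈ S t := by rw [hconst t h1.le h2]; exact hi
    simp only [S, Finset.mem_filter, Finset.mem_univ, true_and] at this
    rw [this, sub_self]
  have hfeq : f (y t2) i - f (x t2) i = 0 := by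
    have hd := (hasDerivAt_pi.1 (hy.hasDerivAt' ht20) i).sub
      (hasDerivAt_pi.1 (hx.hasDerivAt' ht20) i)
    have hd0 : HasDerivAt (fun t => y t i - x t i) 0 t2 := by
      refine (hasDerivAt_const t2 (0 : ℝ)).congr_of_eventuallyEq ?_
      filter_upwards [Ioo_mem_nhds ht12 ht2T] with t ht
      exact hzero t ht.1 ht.2
    exact hd.unique hd0
  have hdi : y t2 i - x t2 i = 0 := hzero t2 ht12 ht2T
  have hdj : 0 < y t2 j - x t2 j := by
    rw [← hconst t2 ht12.le ht2T] at hj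
    simp only [S, Finset.mem_filter, Finset.mem_univ, true_and] at hj
    exact sub_pos.2 (lt_of_le_of_ne (hle t2 ht20.le j) (Ne.symm hj))
  have hijne : i ≠ j := by rintro rfl; exact hj hi
  set a := x t2
  set v := y t2 - x t2 with hv
  have hseg : segment ℝ a (y t2) ⊆ X :=
    seg_sub hpc (hx.1 t2 ht20.le) (hy.1 t2 ht20.le) (hle t2 ht20.le)
  have hderiv : ∀ s ∈ Icc (0:ℝ) 1, HasDerivAt (fun s : ℝ => f (a + s • v) i)
      (fderiv ℝ f (a + s • v) v i) s := fun s hs => hasDerivAt_seg hX hf a v s (seg_mem hseg hs) i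
  have hterm : ∀ z ∈ X, ∀ k, 0 ≤ v k * fderiv ℝ f z (Pi.single k 1) i := by
    intro z hz k
    by_cases hki : k = i
    · subst hki
      have : v k = 0 := hdi
      simp [this]
    · exact mul_nonneg (sub_nonneg.2 (hle t2 ht20.le k)) (hcoop z hz i k (Ne.symm hki))
  have hmon : MonotoneOn (fun s : ℝ => f (a + s • v) i) (Icc 0 1) := by
    apply monotoneOn_of_deriv_nonneg (convex_Icc 0 1)
    · exact fun s hs => (hderiv s hs).continuousAt.continuousWithinAt
    · rw [interior_Icc]
      exact fun s hs =>
        (hderiv s (Ioo_subset_Icc_self hs)).differentiableAt.differentiableWithinAt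
    · rw [interior_Icc]
      intro s hs
      rw [(hderiv s (Ioo_subset_Icc_self hs)).deriv, fderiv_coord]
      exact Finset.sum_nonneg fun k _ => hterm _ (seg_mem hseg (Ioo_subset_Icc_self hs)) k
  have e1 : a + (1 : ℝ) • v = y t2 := by simp [hv, a]
  have e0 : a + (0 : ℝ) • v = a := by simp
  have hcst : ∀ s ∈ Icc (0:ℝ) 1, f (a + s • v) i = f a i := by
    intro s hs
    have h1 := hmon ⟨le_rfl, zero_le_one⟩ hs hs.1
    have h2 := hmon hs ⟨zero_le_one, le_rfl⟩ hs.2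
    simp only [e0, e1] at h1 h2
    have : f (y t2) i = f a i := by linarith
    linarith
  have hd0 : fderiv ℝ f (a + (0:ℝ) • v) v i = 0 := by
    have h1 := (hderiv 0 ⟨le_rfl, zero_le_one⟩).hasDerivWithinAt (s := Icc 0 1)
    have h2 : HasDerivWithinAt (fun s : ℝ => f (a + s • v) i) 0 (Icc 0 1) 0 :=
      (hasDerivWithinAt_const (0:ℝ) (Icc 0 1) (f a i)).congr hcst
        (hcst 0 ⟨le_rfl, zero_le_one⟩)
    exact (uniqueDiffOn_Icc zero_lt_one 0 ⟨le_rfl, zero_le_one⟩).eq_deriv _ h1 h2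
  rw [e0, fderiv_coord] at hd0
  have haX : a ∈ X := hx.1 t2 ht20.le
  have hpos : 0 < v j * fderiv ℝ f a (Pi.single j 1) i :=
    mul_pos hdj (lt_of_le_of_ne (hcoop a haX i j hijne) (Ne.symm hij))
  have : v j * fderiv ℝ f a (Pi.single j 1) i ≤ ∑ k, v k * fderiv ℝ f a (Pi.single k 1) i :=
    Finset.single_le_sum (f := fun k => v k * fderiv ℝ f a (Pi.single k 1) i)
      (fun k _ => hterm a haX k) (Finset.mem_univ j)
  linarith
end

section
/-- The properties of the semiflow which are used in the order-theoretic part of the proof. -/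
structure MonoFlow {n : ℕ} (X : Set (Fin n → ℝ)) (γ : (Fin n → ℝ) → ℝ → (Fin n → ℝ)) : Prop where
  isOpen : IsOpen X
  mem : ∀ x ∈ X, ∀ t, 0 ≤ t → γ x t ∈ X
  zero : ∀ x ∈ X, γ x 0 = x
  add : ∀ x ∈ X, ∀ s t, 0 ≤ s → 0 ≤ t → γ x (s + t) = γ (γ x s) t
  near : ∀ x ∈ X, ∀ T ε : ℝ, 0 < ε → ∃ δ > 0, ∀ y ∈ X, dist y x < δ →
    ∀ t ∈ Icc 0 T, dist (γ y t) (γ x t) < ε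
  ctime : ∀ x ∈ X, ContinuousOn (γ x) (Ici 0)
  mono : ∀ x ∈ X, ∀ y ∈ X, x ≤ y → ∀ t, 0 ≤ t → γ x t ≤ γ y t
  strong : ∀ x ∈ X, ∀ y ∈ X, x < y → ∀ t, 0 < t → strLt (γ x t) (γ y t)
  cpt : ∀ x ∈ X, ∃ K, IsCompact K ∧ K ⊆ X ∧ ∀ t, 0 ≤ t → γ x t ∈ K

lemma monoFlow_of {n : ℕ} {X : Set (Fin n → ℝ)} (hX : IsOpen X) (hpc : pconvex X)
    {f : (Fin n → ℝ) → (Fin n → ℝ)} (hf : ContDiffOn ℝ 1 f X) (hcoop : coopVF f X)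
    (hirr : ∀ x ∈ X, matIrred (jacMat f x))
    (γ : (Fin n → ℝ) → ℝ → (Fin n → ℝ))
    (hsol : ∀ x ∈ X, IsSolOn f X (Set.Ici 0) (γ x) ∧ γ x 0 = x ∧
      IsCompact (closure (γ x '' Set.Ici 0)) ∧ closure (γ x '' Set.Ici 0) ⊆ X) :
    MonoFlow X γ := by
  have near : ∀ x ∈ X, ∀ T ε : ℝ, 0 < ε → ∃ δ > 0, ∀ y ∈ X, dist y x < δ →
      ∀ t ∈ Icc 0 T, dist (γ y t) (γ x t) < ε := by
    intro x hx T ε hε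
    obtain ⟨δ, hδ, h⟩ := sol_close hX hf (hsol x hx).1 T hε
    refine ⟨δ, hδ, fun y hy hd => h (γ y) (hsol y hy).1 ?_⟩
    rwa [(hsol x hx).2.1, (hsol y hy).2.1]
  have mono : ∀ x ∈ X, ∀ y ∈ X, x ≤ y → ∀ t, 0 ≤ t → γ x t ≤ γ y t := by
    intro x hx y hy hxy t ht i
    apply le_of_forall_pos_le_add
    intro ε hε
    obtain ⟨δ, hδ, h⟩ := near y hy t ε hε
    obtain ⟨ρ, hρ, hρX⟩ := Metric.isOpen_iff.1 hX y hy
    set r := min δ ρ / 2 with hr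
    have hr0 : 0 < r := by positivity
    have hd : dist (y + fun _ => r) y ≤ r := by
      rw [dist_eq_norm, add_sub_cancel_left]
      refine (pi_norm_le_iff_of_nonneg hr0.le).2 fun i => ?_
      rw [Real.norm_eq_abs, abs_of_pos hr0]
    have h1 : r < δ := by
      have := min_le_left δ ρ; rw [hr]; linarith
    have h2 : r < ρ := by
      have := min_le_right δ ρ; rw [hr]; linarith
    have hyX : (y + fun _ => r) ∈ X := hρX (hd.trans_lt h2)
    have h3 := h _ hyX (hd.trans_lt h1) t ⟨ht, le_rfl⟩
    have h4 : strLt (γ x t) (γ (y + fun _ => r) t) := by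
      apply strict_order hX hpc hf hcoop (hsol x hx).1 (hsol _ hyX).1 _ ht
      rw [(hsol x hx).2.1, (hsol _ hyX).2.1]
      intro i
      have := hxy i
      simp only [Pi.add_apply]
      linarith
    have h5 := (dist_le_pi_dist (γ (y + fun _ => r) t) (γ y t) i).trans_lt h3
    rw [Real.dist_eq] at h5
    have := h4 i
    have := (abs_lt.1 h5).2
    linarith
  refine ⟨hX, fun x hx t ht => (hsol x hx).1.1 t ht, fun x hx => (hsol x hx).2.1, ?_, near,
    fun x hx => (hsol x hx).1.contOn, mono, ?_, ?_⟩
  · intro x hx s t hs ht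
    have hm := (hsol x hx).1.1 s hs
    refine sol_unique hX hf (hsol _ hm).1 (y := fun t => γ x (s + t)) ⟨?_, ?_⟩ ?_ ht
    · intro r hr
      exact (hsol x hx).1.1 _ (add_nonneg hs hr)
    · intro r hr
      have h1 := (hsol x hx).1.2 (s + r) (add_nonneg hs hr)
      have h2 : HasDerivWithinAt (fun r : ℝ => s + r) 1 (Ici 0) r :=
        ((hasDerivAt_id r).const_add s).hasDerivWithinAt
      have := h1.scomp r h2 (fun r hr => add_nonneg hs hr)
      rw [one_smul] at this
      exact this
    · simp [(hsol _ hm).2.1]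
  · intro x hx y hy hxy t ht
    refine strong_order hX hpc hf hcoop hirr (hsol x hx).1 (hsol y hy).1
      (fun t ht => mono x hx y hy hxy.le t ht) ?_ ht
    rw [(hsol x hx).2.1, (hsol y hy).2.1]
    exact hxy.ne
  · intro x hx
    exact ⟨_, (hsol x hx).2.2.1, (hsol x hx).2.2.2, fun t ht => subset_closure ⟨t, ht, rfl⟩⟩
end

section
lemma strLt.le {n : ℕ} {a b : Fin n → ℝ} (h : strLt a b) : a ≤ b := fun i => (h i).le

lemma isOpen_strLt {n : ℕ} : IsOpen {p : (Fin n → ℝ) × (Fin n → ℝ) | strLt p.1 p.2} := by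
  have : {p : (Fin n → ℝ) × (Fin n → ℝ) | strLt p.1 p.2} = ⋂ i, {p | p.1 i < p.2 i} := by
    ext p; simp [strLt]
  rw [this]
  exact isOpen_iInter_of_finite fun i => isOpen_lt (by fun_prop) (by fun_prop)

lemma eventually_strLt {n : ℕ} {α : Type*} {l : Filter α} {u v : α → Fin n → ℝ} {a b : Fin n → ℝ}
    (hu : Tendsto u l (𝓝 a)) (hv : Tendsto v l (𝓝 b)) (h : strLt a b) :
    ∀ᶠ k in l, strLt (u k) (v k) :=
  (hu.prodMk_nhds hv).eventually (isOpen_strLt.mem_nhds h)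

lemma omega_iff {n : ℕ} {X : Set (Fin n → ℝ)} {c : ℝ → Fin n → ℝ} {y : Fin n → ℝ} :
    y ∈ omegaSet X c ↔ y ∈ X ∧ ∀ ε > 0, ∀ T : ℝ, ∃ t ≥ T, dist (c t) y < ε := by
  constructor
  · rintro ⟨hy, t, ht, hc⟩
    refine ⟨hy, fun ε hε T => ?_⟩
    obtain ⟨k, h1, h2⟩ := ((ht.eventually_ge_atTop T).and
      (hc.eventually (Metric.ball_mem_nhds y hε))).exists
    exact ⟨t k, h1, h2⟩
  · rintro ⟨hy, h⟩
    have : ∀ k : ℕ, ∃ t ≥ (k : ℝ), dist (c t) y < 1 / ((k : ℝ) + 1) := fun k =>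
      h _ (by positivity) _
    choose t ht hd using this
    refine ⟨hy, t, tendsto_atTop_mono ht tendsto_natCast_atTop_atTop, ?_⟩
    rw [tendsto_iff_dist_tendsto_zero]
    exact squeeze_zero (fun _ => dist_nonneg) (fun k => (hd k).le)
      tendsto_one_div_add_atTop_nhds_zero_nat

namespace MonoFlow

variable {n : ℕ} {X : Set (Fin n → ℝ)} {γ : (Fin n → ℝ) → ℝ → (Fin n → ℝ)}

lemma cinit (F : MonoFlow X γ) {x : Fin n → ℝ} (hx : x ∈ X) {t : ℝ} (ht : 0 ≤ t) :
    Tendsto (fun y => γ y t) (𝓝 x) (𝓝 (γ x t)) := by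
  rw [Metric.tendsto_nhds]
  intro ε hε
  obtain ⟨δ, hδ, h⟩ := F.near x hx t ε hε
  filter_upwards [Metric.ball_mem_nhds x hδ, F.isOpen.mem_nhds hx] with y hy hyX
  exact h y hyX hy t ⟨ht, le_rfl⟩

lemma omega_sub (F : MonoFlow X γ) {x : Fin n → ℝ} (hx : x ∈ X) {t : ℕ → ℝ}
    (ht : Tendsto t atTop atTop) : ∃ p ∈ omegaSet X (γ x), ∃ ψ : ℕ → ℕ, StrictMono ψ ∧
      Tendsto (fun k => γ x (t (ψ k))) atTop (𝓝 p) := by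
  obtain ⟨K, hK, hKX, hm⟩ := F.cpt x hx
  obtain ⟨p, hp, ψ, hψ, h⟩ := hK.tendsto_subseq' (x := fun k => γ x (t k))
    ((ht.eventually_ge_atTop 0).mono fun k hk => hm _ hk).frequently
  exact ⟨p, ⟨hKX hp, t ∘ ψ, ht.comp hψ.tendsto_atTop, h⟩, ψ, hψ, h⟩

lemma omega_nonempty (F : MonoFlow X γ) {x : Fin n → ℝ} (hx : x ∈ X) :
    (omegaSet X (γ x)).Nonempty := by
  obtain ⟨p, hp, _⟩ := F.omega_sub hx tendsto_natCast_atTop_atTop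
  exact ⟨p, hp⟩

/-- shifting a convergent sequence forward -/
lemma tendsto_shift (F : MonoFlow X γ) {x : Fin n → ℝ} (hx : x ∈ X) {t : ℕ → ℝ}
    (ht : Tendsto t atTop atTop) {p : Fin n → ℝ} (hp : p ∈ X)
    (h : Tendsto (fun k => γ x (t k)) atTop (𝓝 p)) {s : ℝ} (hs : 0 ≤ s) :
    Tendsto (fun k => γ x (t k + s)) atTop (𝓝 (γ p s)) := by
  refine ((F.cinit hp hs).comp h).congr' ?_
  filter_upwards [ht.eventually_ge_atTop 0] with k hk
  simp only [Function.comp]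
  rw [F.add x hx _ _ hk hs]

lemma omega_inv (F : MonoFlow X γ) {x : Fin n → ℝ} (hx : x ∈ X) {p : Fin n → ℝ}
    (hp : p ∈ omegaSet X (γ x)) {s : ℝ} (hs : 0 ≤ s) : γ p s ∈ omegaSet X (γ x) := by
  obtain ⟨hpX, t, ht, h⟩ := hp
  exact ⟨F.mem p hpX s hs, fun k => t k + s, tendsto_atTop_add_const_right _ _ ht,
    F.tendsto_shift hx ht hpX h hs⟩

lemma omega_back (F : MonoFlow X γ) {x : Fin n → ℝ} (hx : x ∈ X) {p : Fin n → ℝ}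
    (hp : p ∈ omegaSet X (γ x)) {s : ℝ} (hs : 0 ≤ s) : ∃ q ∈ omegaSet X (γ x), γ q s = p := by
  obtain ⟨hpX, t, ht, h⟩ := hp
  have ht' : Tendsto (fun k => t k + -s) atTop atTop := tendsto_atTop_add_const_right _ _ ht
  obtain ⟨q, hq, ψ, hψ, hl⟩ := F.omega_sub hx ht'
  refine ⟨q, hq, ?_⟩
  have h1 := F.tendsto_shift hx (ht'.comp hψ.tendsto_atTop) hq.1 hl hs
  simp only [Function.comp, neg_add_cancel_right] at h1
  exact tendsto_nhds_unique h1 (h.comp hψ.tendsto_atTop)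

lemma omega_closed (F : MonoFlow X γ) {x : Fin n → ℝ} (hx : x ∈ X) :
    IsClosed (omegaSet X (γ x)) := by
  obtain ⟨K, hK, hKX, hm⟩ := F.cpt x hx
  have hsub : omegaSet X (γ x) ⊆ K := by
    rintro p ⟨hp, t, ht, h⟩
    exact hK.isClosed.mem_of_tendsto h ((ht.eventually_ge_atTop 0).mono fun k hk => hm _ hk)
  rw [← closure_subset_iff_isClosed]
  intro y hy
  refine omega_iff.2 ⟨hKX (hK.isClosed.closure_subset_iff.2 hsub hy), fun ε hε T => ?_⟩
  obtain ⟨w, hw, hd⟩ := Metric.mem_closure_iff.1 hy (ε / 2) (by positivity)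
  obtain ⟨t, ht, h⟩ := (omega_iff.1 hw).2 (ε / 2) (by positivity) T
  refine ⟨t, ht, ?_⟩
  have := dist_triangle (γ x t) w y
  rw [dist_comm] at hd
  linarith

lemma omega_compact (F : MonoFlow X γ) {x : Fin n → ℝ} (hx : x ∈ X) :
    IsCompact (omegaSet X (γ x)) := by
  obtain ⟨K, hK, hKX, hm⟩ := F.cpt x hx
  refine hK.of_isClosed_subset (F.omega_closed hx) ?_
  rintro p ⟨hp, t, ht, h⟩
  exact hK.isClosed.mem_of_tendsto h ((ht.eventually_ge_atTop 0).mono fun k hk => hm _ hk)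

lemma omega_omega (F : MonoFlow X γ) {x : Fin n → ℝ} (hx : x ∈ X) {a : Fin n → ℝ}
    (ha : a ∈ omegaSet X (γ x)) : omegaSet X (γ a) ⊆ omegaSet X (γ x) := by
  rintro p ⟨hp, t, ht, h⟩
  exact (F.omega_closed hx).mem_of_tendsto h
    ((ht.eventually_ge_atTop 0).mono fun k hk => F.omega_inv hx ha hk)

lemma omega_of_tendsto {x e : Fin n → ℝ} (h : Tendsto (γ x) atTop (𝓝 e)) {q : Fin n → ℝ}
    (hq : q ∈ omegaSet X (γ x)) : q = e := by
  obtain ⟨_, t, ht, h'⟩ := hq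
  exact tendsto_nhds_unique h' (h.comp ht)

lemma iter_eq (F : MonoFlow X γ) {p : Fin n → ℝ} (hp : p ∈ X) {r : ℝ} (hr : 0 ≤ r)
    (h : γ p r = p) (k : ℕ) : γ p (k * r) = p := by
  induction k with
  | zero => simpa using F.zero p hp
  | succ k ih =>
    rw [Nat.cast_succ, add_mul, one_mul, F.add p hp _ _ (by positivity) hr, ih, h]

lemma eq_of_eventually (F : MonoFlow X γ) {p : Fin n → ℝ} (hp : p ∈ X) {T : ℝ} (hT : 0 < T)
    (h : ∀ᶠ m : ℕ in atTop, γ p (T / m) = p) {t : ℝ} (ht : 0 ≤ t) : γ p t = p := by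
  have h1 : Tendsto (fun m : ℕ => (⌊t / T * (m : ℝ)⌋₊ : ℝ) / (m : ℝ)) atTop (𝓝 (t / T)) :=
    (tendsto_nat_floor_mul_div_atTop (div_nonneg ht hT.le)).comp tendsto_natCast_atTop_atTop
  have h2 : Tendsto (fun m : ℕ => (⌊t / T * (m : ℝ)⌋₊ : ℝ) * (T / (m : ℝ))) atTop (𝓝 t) := by
    have := h1.mul_const T
    rw [div_mul_cancel₀ _ hT.ne'] at this
    exact this.congr fun m => by ring
  have h3 : Tendsto (fun m : ℕ => (⌊t / T * (m : ℝ)⌋₊ : ℝ) * (T / (m : ℝ))) atTop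
      (𝓝[Ici 0] t) :=
    tendsto_nhdsWithin_iff.2 ⟨h2, Eventually.of_forall fun m => by
      show (0:ℝ) ≤ _; positivity⟩
  have h4 := (F.ctime p hp t ht).tendsto.comp h3
  refine tendsto_nhds_unique h4 (tendsto_const_nhds.congr' ?_)
  filter_upwards [h] with m hm
  exact (F.iter_eq hp (by positivity) hm _).symm

lemma incr_limit (F : MonoFlow X γ) {x : Fin n → ℝ} (hx : x ∈ X) {T : ℝ} (hT : 0 < T)
    (h : x ≤ γ x T) : ∃ p ∈ X, Tendsto (fun k : ℕ => γ x (k * T)) atTop (𝓝 p) ∧ γ p T = p := by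
  have hmono : Monotone (fun k : ℕ => γ x (k * T)) := by
    apply monotone_nat_of_le_succ
    intro k
    have e : ((k + 1 : ℕ) : ℝ) * T = T + k * T := by push_cast; ring
    rw [e, F.add x hx T _ hT.le (by positivity)]
    exact F.mono x hx _ (F.mem x hx T hT.le) h _ (by positivity)
  obtain ⟨K, hK, hKX, hm⟩ := F.cpt x hx
  have hbdd : BddAbove (range fun k : ℕ => γ x (k * T)) := by
    refine BddAbove.mono (t := K) ?_ hK.isBounded.bddAbove
    rintro _ ⟨k, rfl⟩
    exact hm _ (by positivity)
  have hlim := tendsto_atTop_ciSup hmono hbdd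
  set p := ⨆ k : ℕ, γ x (k * T)
  have hp : p ∈ X := hKX (hK.isClosed.mem_of_tendsto hlim
    (Eventually.of_forall fun k => hm _ (by positivity)))
  refine ⟨p, hp, hlim, ?_⟩
  have ht : Tendsto (fun k : ℕ => (k : ℝ) * T) atTop atTop :=
    tendsto_natCast_atTop_atTop.atTop_mul_const hT
  have h1 := F.tendsto_shift hx ht hp hlim hT.le
  have h2 := hlim.comp (tendsto_add_atTop_nat 1)
  refine tendsto_nhds_unique h1 (h2.congr fun k => ?_)
  simp only [Function.comp]
  congr 1
  push_cast; ring

lemma conv_crit (F : MonoFlow X γ) {x : Fin n → ℝ} (hx : x ∈ X) {T : ℝ} (hT : 0 < T)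
    (h : strLt x (γ x T)) : ∃ e, Tendsto (γ x) atTop (𝓝 e) := by
  obtain ⟨p, hp, hlim, hper⟩ := F.incr_limit hx hT h.le
  have hTm : Tendsto (fun m : ℕ => T + T / (m : ℝ)) atTop (𝓝 T) := by
    simpa using (tendsto_const_nhds (x := T)).add
      (tendsto_const_nhds.div_atTop tendsto_natCast_atTop_atTop)
  have hev : ∀ᶠ m : ℕ in atTop, strLt x (γ x (T + T / (m : ℝ))) :=
    eventually_strLt tendsto_const_nhds
      (((F.ctime x hx).continuousAt (Ici_mem_nhds hT)).tendsto.comp hTm) h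
  have heq : ∀ t, 0 ≤ t → γ p t = p := by
    intro t ht
    refine F.eq_of_eventually hp hT ?_ ht
    filter_upwards [hev, eventually_gt_atTop 0] with m hm hm0
    have hm0' : (0:ℝ) < m := by exact_mod_cast hm0
    obtain ⟨p', hp', hlim', hper'⟩ := F.incr_limit hx (by positivity) hm.le
    have e1 : Tendsto (fun k : ℕ => γ x (((k * m : ℕ) : ℝ) * (T + T / m))) atTop (𝓝 p') :=
      hlim'.comp (tendsto_id.atTop_mul_const' hm0)
    have e2 : Tendsto (fun k : ℕ => γ x (((k * (m + 1) : ℕ) : ℝ) * T)) atTop (𝓝 p) :=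
      hlim.comp (tendsto_id.atTop_mul_const' (Nat.succ_pos m))
    have : p' = p := by
      refine tendsto_nhds_unique e1 (e2.congr fun k => ?_)
      congr 1
      push_cast
      field_simp
    subst this
    rw [F.add p' hp T _ hT.le (by positivity), hper] at hper'
    exact hper'
  refine ⟨p, ?_⟩
  rw [Metric.tendsto_nhds]
  intro ε hε
  obtain ⟨δ, hδ, hd⟩ := F.near p hp T ε hε
  obtain ⟨k, hk⟩ := eventually_atTop.1 (hlim.eventually (Metric.ball_mem_nhds p hδ))
  filter_upwards [eventually_ge_atTop ((k : ℝ) * T)] with t ht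
  have hk0 : (0:ℝ) ≤ k := by positivity
  have ht0 : 0 ≤ t := le_trans (by positivity) ht
  set m := ⌊t / T⌋₊
  have hm1 : (m : ℝ) * T ≤ t := by
    have := Nat.floor_le (div_nonneg ht0 hT.le)
    rwa [le_div_iff₀ hT] at this
  have hm2 : t < (m + 1 : ℝ) * T := by
    have := Nat.lt_floor_add_one (t / T)
    rwa [div_lt_iff₀ hT] at this
  have hkm : k ≤ m := Nat.le_floor ((le_div_iff₀ hT).2 ht)
  have := hd _ (F.mem x hx (m * T) (by positivity)) (hk m hkm) (t - m * T)
    ⟨by linarith, by linarith⟩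
  rw [heq _ (by linarith), ← F.add x hx _ _ (by positivity) (by linarith)] at this
  simpa using this

lemma nonorder (F : MonoFlow X γ) {x : Fin n → ℝ} (hx : x ∈ X) {p q : Fin n → ℝ}
    (hp : p ∈ omegaSet X (γ x)) (hq : q ∈ omegaSet X (γ x)) : ¬ p < q := by
  intro hpq
  have hs := F.strong p hp.1 q hq.1 hpq 1 one_pos
  obtain ⟨hp1, t, ht, h⟩ := F.omega_inv hx hp zero_le_one
  obtain ⟨hq1, s, hs', h'⟩ := F.omega_inv hx hq zero_le_one
  obtain ⟨k, hk, hk0⟩ := ((eventually_strLt h tendsto_const_nhds hs).and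
    (ht.eventually_ge_atTop 0)).exists
  obtain ⟨j, hj, hj0⟩ := ((eventually_strLt tendsto_const_nhds h' hk).and
    (hs'.eventually_gt_atTop (t k))).exists
  have hX1 := F.mem x hx _ hk0
  obtain ⟨e, he⟩ := F.conv_crit hX1 (T := s j - t k) (by linarith) (by
    rw [← F.add x hx _ _ hk0 (by linarith)]
    simpa using hj)
  have he' : Tendsto (γ x) atTop (𝓝 e) := by
    refine (he.comp (tendsto_atTop_add_const_right atTop (-(t k)) tendsto_id)).congr' ?_
    filter_upwards [eventually_ge_atTop (t k)] with r hr
    simp only [Function.comp, id]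
    rw [← F.add x hx _ _ hk0 (by linarith)]
    congr 1; ring
  rw [omega_of_tendsto he' hp, omega_of_tendsto he' hq] at hpq
  exact lt_irrefl _ hpq

end MonoFlow
end

section
namespace MonoFlow

variable {n : ℕ} {X : Set (Fin n → ℝ)} {γ : (Fin n → ℝ) → ℝ → (Fin n → ℝ)}

lemma shift_le (F : MonoFlow X γ) {x y : Fin n → ℝ} (hx : x ∈ X) (hy : y ∈ X) {a b t : ℝ}
    (ha : 0 ≤ a) (hb : 0 ≤ b) (h : γ x a ≤ γ y b) (ht : 0 ≤ t) :
    γ x (a + t) ≤ γ y (b + t) := by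
  rw [F.add x hx a t ha ht, F.add y hy b t hb ht]
  exact F.mono _ (F.mem x hx a ha) _ (F.mem y hy b hb) h t ht

lemma ctime_shift (F : MonoFlow X γ) {x : Fin n → ℝ} (hx : x ∈ X) {r : ℝ} (hr : 0 < r) :
    Tendsto (fun s => γ x (r + s)) (𝓝 0) (𝓝 (γ x r)) := by
  have h1 : Tendsto (fun s : ℝ => r + s) (𝓝 0) (𝓝 r) := by
    simpa using (tendsto_const_nhds (x := r)).add (tendsto_id (α := ℝ) (x := 𝓝 0))
  exact ((F.ctime x hx).continuousAt (Ici_mem_nhds hr)).tendsto.comp h1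

lemma colimit (F : MonoFlow X γ) {x y : Fin n → ℝ} (hx : x ∈ X) (hy : y ∈ X) (hxy : x < y)
    {t : ℕ → ℝ} (ht : Tendsto t atTop atTop) {p : Fin n → ℝ} (hp : p ∈ X)
    (h1 : Tendsto (fun k => γ x (t k)) atTop (𝓝 p))
    (h2 : Tendsto (fun k => γ y (t k)) atTop (𝓝 p)) {s : ℝ} (hs : 0 ≤ s) : γ p s = p := by
  have hst := F.strong x hx y hy hxy 1 one_pos
  have e1 := eventually_strLt (F.ctime_shift hx one_pos) tendsto_const_nhds hst
  have e2 := eventually_strLt tendsto_const_nhds (F.ctime_shift hy one_pos) hst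
  have hlim : Tendsto (fun m : ℕ => (1:ℝ) / m) atTop (𝓝 0) :=
    tendsto_const_nhds.div_atTop tendsto_natCast_atTop_atTop
  refine F.eq_of_eventually hp one_pos ?_ hs
  filter_upwards [hlim.eventually e1, hlim.eventually e2] with m hm1 hm2
  have hr : (0:ℝ) ≤ 1 / m := by positivity
  have l1 := F.tendsto_shift hx ht hp h1 hr
  have l2 := F.tendsto_shift hy ht hp h2 hr
  apply le_antisymm
  · refine le_of_tendsto_of_tendsto l1 h2 ?_
    filter_upwards [ht.eventually_ge_atTop 1] with k hk
    have := F.shift_le hx hy (by linarith) zero_le_one hm1.le (t := t k - 1) (by linarith)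
    have q1 : 1 + 1 / (m:ℝ) + (t k - 1) = t k + 1 / m := by ring
    have q2 : 1 + (t k - 1) = t k := by ring
    rw [q1, q2] at this
    exact this
  · refine le_of_tendsto_of_tendsto h1 l2 ?_
    filter_upwards [ht.eventually_ge_atTop 1] with k hk
    have := F.shift_le hx hy zero_le_one (by linarith) hm2.le (t := t k - 1) (by linarith)
    have q1 : 1 + 1 / (m:ℝ) + (t k - 1) = t k + 1 / m := by ring
    have q2 : 1 + (t k - 1) = t k := by ring
    rw [q1, q2] at this
    exact this

lemma le_lim (F : MonoFlow X γ) {x y : Fin n → ℝ} (hx : x ∈ X) (hy : y ∈ X) (hxy : x ≤ y)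
    {t : ℕ → ℝ} (ht : Tendsto t atTop atTop) {p q : Fin n → ℝ}
    (h1 : Tendsto (fun k => γ x (t k)) atTop (𝓝 p))
    (h2 : Tendsto (fun k => γ y (t k)) atTop (𝓝 q)) : p ≤ q := by
  refine le_of_tendsto_of_tendsto h1 h2 ?_
  filter_upwards [ht.eventually_ge_atTop 0] with k hk
  exact F.mono x hx y hy hxy _ hk

/-- If `γ x (t k) → p ∈ ω(y)` then `γ y (t k) → p`. -/
lemma inter_up (F : MonoFlow X γ) {x y : Fin n → ℝ} (hx : x ∈ X) (hy : y ∈ X) (hxy : x < y)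
    {t : ℕ → ℝ} (ht : Tendsto t atTop atTop) {p : Fin n → ℝ} (hp : p ∈ omegaSet X (γ y))
    (h1 : Tendsto (fun k => γ x (t k)) atTop (𝓝 p)) :
    Tendsto (fun k => γ y (t k)) atTop (𝓝 p) := by
  apply tendsto_of_subseq_tendsto
  intro ns hns
  obtain ⟨q, hq, ψ, hψ, h⟩ := F.omega_sub hy (ht.comp hns)
  have hle : p ≤ q := F.le_lim hx hy hxy.le ((ht.comp hns).comp hψ.tendsto_atTop)
    (h1.comp (hns.comp hψ.tendsto_atTop)) h
  rcases hle.eq_or_lt with rfl | hlt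
  · exact ⟨ψ, h⟩
  · exact absurd hlt (F.nonorder hy hp hq)

lemma inter_down (F : MonoFlow X γ) {x y : Fin n → ℝ} (hx : x ∈ X) (hy : y ∈ X) (hxy : x < y)
    {t : ℕ → ℝ} (ht : Tendsto t atTop atTop) {p : Fin n → ℝ} (hp : p ∈ omegaSet X (γ x))
    (h1 : Tendsto (fun k => γ y (t k)) atTop (𝓝 p)) :
    Tendsto (fun k => γ x (t k)) atTop (𝓝 p) := by
  apply tendsto_of_subseq_tendsto
  intro ns hns
  obtain ⟨q, hq, ψ, hψ, h⟩ := F.omega_sub hx (ht.comp hns)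
  have hle : q ≤ p := F.le_lim hx hy hxy.le ((ht.comp hns).comp hψ.tendsto_atTop) h
    (h1.comp (hns.comp hψ.tendsto_atTop))
  rcases hle.eq_or_lt with rfl | hlt
  · exact ⟨ψ, h⟩
  · exact absurd hlt (F.nonorder hx hq hp)

lemma inter_eq (F : MonoFlow X γ) {x y : Fin n → ℝ} (hx : x ∈ X) (hy : y ∈ X) (hxy : x < y)
    {p : Fin n → ℝ} (hp : p ∈ omegaSet X (γ x)) (hp' : p ∈ omegaSet X (γ y)) {s : ℝ}
    (hs : 0 ≤ s) : γ p s = p := by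
  have hpx := hp
  obtain ⟨hpX, t, ht, h⟩ := hp
  exact F.colimit hx hy hxy ht hpX h (F.inter_up hx hy hxy ht hp' h) hs

lemma absorb_up (F : MonoFlow X γ) {u v : Fin n → ℝ} (hu : u ∈ X) (hv : v ∈ X)
    {p : Fin n → ℝ} (hp : p ∈ omegaSet X (γ u)) (h : ∀ k ∈ omegaSet X (γ v), p < k) :
    ∀ a ∈ omegaSet X (γ u), ∀ b ∈ omegaSet X (γ v), a < b := by
  have hp1 := F.omega_inv hu hp zero_le_one
  have hlt : ∀ k ∈ omegaSet X (γ v), strLt (γ p 1) k := by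
    intro k hk
    obtain ⟨k', hk', rfl⟩ := F.omega_back hv hk zero_le_one
    exact F.strong p hp.1 k' hk'.1 (h k' hk') 1 one_pos
  have hev : ∀ᶠ z in 𝓝 (γ p 1), ∀ k ∈ omegaSet X (γ v), strLt z k := by
    refine (F.omega_compact hv).eventually_forall_of_forall_eventually fun k hk => ?_
    exact isOpen_strLt.mem_nhds (hlt k hk)
  obtain ⟨_, t, ht, hl⟩ := hp1
  obtain ⟨j, hj, hj0⟩ := ((hl.eventually hev).and (ht.eventually_ge_atTop 0)).exists
  have hle : ∀ a ∈ omegaSet X (γ u), ∀ b ∈ omegaSet X (γ v), a ≤ b := by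
    rintro a ⟨haX, s, hs, ha⟩ b hb
    refine le_of_tendsto ha ?_
    filter_upwards [hs.eventually_ge_atTop (t j)] with k hk
    obtain ⟨b', hb', rfl⟩ := F.omega_back hv hb (s := s k - t j) (by linarith)
    have h1 := F.mono _ (F.mem u hu _ hj0) b' hb'.1 (hj b' hb').le (s k - t j) (by linarith)
    rw [← F.add u hu _ _ hj0 (by linarith)] at h1
    simpa using h1
  intro a ha b hb
  refine lt_of_le_of_ne (hle a ha b hb) ?_
  rintro rfl
  exact F.nonorder hu hp ha (h a hb)

lemma absorb_down (F : MonoFlow X γ) {u v : Fin n → ℝ} (hu : u ∈ X) (hv : v ∈ X)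
    {p : Fin n → ℝ} (hp : p ∈ omegaSet X (γ u)) (h : ∀ k ∈ omegaSet X (γ v), k < p) :
    ∀ a ∈ omegaSet X (γ u), ∀ b ∈ omegaSet X (γ v), b < a := by
  have hp1 := F.omega_inv hu hp zero_le_one
  have hlt : ∀ k ∈ omegaSet X (γ v), strLt k (γ p 1) := by
    intro k hk
    obtain ⟨k', hk', rfl⟩ := F.omega_back hv hk zero_le_one
    exact F.strong k' hk'.1 p hp.1 (h k' hk') 1 one_pos
  have hev : ∀ᶠ z in 𝓝 (γ p 1), ∀ k ∈ omegaSet X (γ v), strLt k z := by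
    refine (F.omega_compact hv).eventually_forall_of_forall_eventually fun k hk => ?_
    exact eventually_strLt (u := fun z : (Fin n → ℝ) × (Fin n → ℝ) => z.2)
      (v := fun z : (Fin n → ℝ) × (Fin n → ℝ) => z.1)
      (continuous_snd.tendsto _) (continuous_fst.tendsto _) (hlt k hk)
  obtain ⟨_, t, ht, hl⟩ := hp1
  obtain ⟨j, hj, hj0⟩ := ((hl.eventually hev).and (ht.eventually_ge_atTop 0)).exists
  have hle : ∀ a ∈ omegaSet X (γ u), ∀ b ∈ omegaSet X (γ v), b ≤ a := by
    rintro a ⟨haX, s, hs, ha⟩ b hb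
    refine ge_of_tendsto ha ?_
    filter_upwards [hs.eventually_ge_atTop (t j)] with k hk
    obtain ⟨b', hb', rfl⟩ := F.omega_back hv hb (s := s k - t j) (by linarith)
    have h1 := F.mono b' hb'.1 _ (F.mem u hu _ hj0) (hj b' hb').le (s k - t j) (by linarith)
    rw [← F.add u hu _ _ hj0 (by linarith)] at h1
    simpa using h1
  intro a ha b hb
  refine lt_of_le_of_ne (hle a ha b hb) ?_
  rintro rfl
  exact F.nonorder hu ha hp (h b hb)

lemma orbit_le (F : MonoFlow X γ) {x y : Fin n → ℝ} (hx : x ∈ X) (hy : y ∈ X) (hxy : x < y)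
    {t : ℕ → ℝ} (ht : Tendsto t atTop atTop) {a b : Fin n → ℝ} (ha : a ∈ X) (hb : b ∈ X)
    (h1 : Tendsto (fun k => γ x (t k)) atTop (𝓝 a))
    (h2 : Tendsto (fun k => γ y (t k)) atTop (𝓝 b)) (hab : a < b) {r : ℝ} (hr : 0 ≤ r) :
    γ a r ≤ b := by
  have haω : a ∈ omegaSet X (γ x) := ⟨ha, t, ht, h1⟩
  have hbω : b ∈ omegaSet X (γ y) := ⟨hb, t, ht, h2⟩
  have hbx : b ∉ omegaSet X (γ x) := by
    intro hb'
    have := F.inter_down hx hy hxy ht hb' h2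
    exact hab.ne (tendsto_nhds_unique h1 this)
  have hsub : Icc 0 r ⊆ {s | γ a s ≤ b} := by
    apply IsClosed.Icc_subset_of_forall_exists_gt
    · have := ((F.ctime a ha).mono (fun s hs => hs.1 : Icc 0 r ⊆ Ici 0)).preimage_isClosed_of_isClosed
        isClosed_Icc (isClosed_Iic (a := b))
      rwa [inter_comm] at this
    · show γ a 0 ≤ b
      rw [F.zero a ha]; exact hab.le
    · rintro s ⟨hsb, hs⟩ z hz
      have hsb : γ a s ≤ b := hsb
      have hz : s < z := hz
      have hlt : γ a s < b := by
        refine lt_of_le_of_ne hsb ?_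
        intro h
        exact hbx (h ▸ F.omega_inv hx haω hs.1)
      have hst := F.strong _ (F.mem a ha s hs.1) b hb hlt 1 one_pos
      rw [← F.add a ha s 1 hs.1 zero_le_one] at hst
      have hs1 : 0 < s + 1 := by linarith [hs.1]
      have e1 := eventually_strLt (F.ctime_shift ha hs1) tendsto_const_nhds hst
      have e2 : ∀ᶠ d in 𝓝[>] (0:ℝ), strLt (γ a (s + 1 + d)) (γ b 1) ∧ 0 < d ∧ d < z - s := by
        filter_upwards [nhdsWithin_le_nhds e1, self_mem_nhdsWithin,
          nhdsWithin_le_nhds (Iio_mem_nhds (sub_pos.2 hz))] with d p1 p2 p3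
        exact ⟨p1, p2, p3⟩
      obtain ⟨d, hd, hd0, hdz⟩ := e2.exists
      refine ⟨s + d, ?_, by linarith, by linarith⟩
      show γ a (s + d) ≤ b
      have hsd : 0 ≤ s + d := by linarith [hs.1]
      have l1 := F.tendsto_shift hx ht ha h1 (s := s + 1 + d) (by linarith)
      have l2 := F.tendsto_shift hy ht hb h2 zero_le_one
      obtain ⟨k, hk, hk0⟩ := ((eventually_strLt l1 l2 hd).and (ht.eventually_ge_atTop 0)).exists
      refine le_of_tendsto_of_tendsto (F.tendsto_shift hx ht ha h1 hsd) h2 ?_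
      filter_upwards [ht.eventually_ge_atTop (t k + 1)] with j hj
      have := F.shift_le hx hy (by linarith) (by linarith) hk.le (t := t j - (t k + 1))
        (by linarith)
      have q1' : t k + (s + 1 + d) + (t j - (t k + 1)) = t j + (s + d) := by ring
      have q2 : t k + 1 + (t j - (t k + 1)) = t j := by ring
      rw [q1', q2] at this
      exact this
  exact hsub ⟨hr, le_rfl⟩

lemma separation (F : MonoFlow X γ) {x y : Fin n → ℝ} (hx : x ∈ X) (hy : y ∈ X) (hxy : x < y)
    {t : ℕ → ℝ} (ht : Tendsto t atTop atTop) {a b : Fin n → ℝ} (ha : a ∈ X) (hb : b ∈ X)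
    (h1 : Tendsto (fun k => γ x (t k)) atTop (𝓝 a))
    (h2 : Tendsto (fun k => γ y (t k)) atTop (𝓝 b)) (hab : a < b) :
    ∀ a ∈ omegaSet X (γ x), ∀ b ∈ omegaSet X (γ y), a < b := by
  have haω : a ∈ omegaSet X (γ x) := ⟨ha, t, ht, h1⟩
  have hbω : b ∈ omegaSet X (γ y) := ⟨hb, t, ht, h2⟩
  have hbx : b ∉ omegaSet X (γ x) := by
    intro hb'
    have := F.inter_down hx hy hxy ht hb' h2
    exact hab.ne (tendsto_nhds_unique h1 this)
  have hωa : ∀ k ∈ omegaSet X (γ a), k < b := by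
    intro k hk
    have hkx := F.omega_omega hx haω hk
    obtain ⟨hkX, s, hs, hl⟩ := hk
    refine lt_of_le_of_ne (le_of_tendsto hl ?_) ?_
    · filter_upwards [hs.eventually_ge_atTop 0] with j hj
      exact F.orbit_le hx hy hxy ht ha hb h1 h2 hab hj
    · rintro rfl
      exact hbx hkx
  have hd := F.absorb_down hy ha hbω hωa
  obtain ⟨z, hz⟩ := F.omega_nonempty ha
  exact F.absorb_up hx hy (F.omega_omega hx haω hz) fun k hk => hd k hk z hz

lemma dichotomy (F : MonoFlow X γ) {x y : Fin n → ℝ} (hx : x ∈ X) (hy : y ∈ X) (hxy : x < y) :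
    (∀ a ∈ omegaSet X (γ x), ∀ b ∈ omegaSet X (γ y), a < b) ∨
    omegaSet X (γ x) = omegaSet X (γ y) := by
  by_cases he : omegaSet X (γ x) = omegaSet X (γ y)
  · exact Or.inr he
  left
  by_cases h : omegaSet X (γ x) ⊆ omegaSet X (γ y)
  · have h' : ¬ omegaSet X (γ y) ⊆ omegaSet X (γ x) := fun h' => he (h.antisymm h')
    obtain ⟨q, hq, hqx⟩ := not_subset.1 h'
    obtain ⟨hqX, t, ht, hl⟩ := hq
    obtain ⟨p, hp, ψ, hψ, hl'⟩ := F.omega_sub hx ht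
    have hle := F.le_lim hx hy hxy.le (ht.comp hψ.tendsto_atTop) hl' (hl.comp hψ.tendsto_atTop)
    refine F.separation hx hy hxy (ht.comp hψ.tendsto_atTop) hp.1 hqX hl'
      (hl.comp hψ.tendsto_atTop) (lt_of_le_of_ne hle ?_)
    rintro rfl; exact hqx hp
  · obtain ⟨p, hp, hpy⟩ := not_subset.1 h
    obtain ⟨hpX, t, ht, hl⟩ := hp
    obtain ⟨q, hq, ψ, hψ, hl'⟩ := F.omega_sub hy ht
    have hle := F.le_lim hx hy hxy.le (ht.comp hψ.tendsto_atTop) (hl.comp hψ.tendsto_atTop) hl'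
    refine F.separation hx hy hxy (ht.comp hψ.tendsto_atTop) hpX hq.1
      (hl.comp hψ.tendsto_atTop) hl' (lt_of_le_of_ne hle ?_)
    rintro rfl; exact hpy hq

end MonoFlow
end

section
open Matrix

section LinAlg
variable {n : ℕ}

/-- off-diagonal entries are nonnegative -/
def Metz (A : Matrix (Fin n) (Fin n) ℝ) : Prop := ∀ i j, i ≠ j → 0 ≤ A i j

lemma irred_transpose {A : Matrix (Fin n) (Fin n) ℝ} (h : matIrred A) : matIrred Aᵀ := by
  intro S hS hS'
  obtain ⟨i, hi, j, hj, hij⟩ := h Sᶜ (nonempty_compl.2 hS') (by simpa using hS.ne_empty)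
  exact ⟨j, by simpa using hj, i, hi, hij⟩

lemma mulVec_nonneg_of_zero {A : Matrix (Fin n) (Fin n) ℝ} (hM : Metz A) {v : Fin n → ℝ}
    (hv : 0 ≤ v) {i : Fin n} (hi : v i = 0) : 0 ≤ (A *ᵥ v) i := by
  show 0 ≤ ∑ j, A i j * v j
  refine Finset.sum_nonneg fun j _ => ?_
  by_cases h : i = j
  · subst h; simp [hi]
  · exact mul_nonneg (hM i j h) (hv j)

lemma exists_pos {A : Matrix (Fin n) (Fin n) ℝ} (hM : Metz A) (hI : matIrred A) {v : Fin n → ℝ}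
    (hv : 0 ≤ v) (hv0 : v ≠ 0) (hz : ∃ i, v i = 0) : ∃ i, v i = 0 ∧ 0 < (A *ᵥ v) i := by
  obtain ⟨i, hi, j, hj, hij⟩ := hI {i | v i = 0} hz (by
    intro h
    apply hv0
    funext i
    have : i ∈ {i | v i = 0} := h ▸ mem_univ i
    exact this)
  refine ⟨i, hi, ?_⟩
  have hne : i ≠ j := fun h => hj (h ▸ hi)
  have hvj : 0 < v j := lt_of_le_of_ne (hv j) (Ne.symm hj)
  have hA : 0 < A i j := lt_of_le_of_ne (hM i j hne) hij.symm
  refine Finset.sum_pos' (fun k _ => ?_) ⟨j, Finset.mem_univ _, mul_pos hA hvj⟩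
  by_cases h : i = k
  · subst h
    have : v i = 0 := hi
    simp [this]
  · exact mul_nonneg (hM i k h) (hv k)

lemma pos_of_sub {A : Matrix (Fin n) (Fin n) ℝ} (hM : Metz A) (hI : matIrred A) {v : Fin n → ℝ}
    (hv : 0 ≤ v) (hv0 : v ≠ 0) (hA : A *ᵥ v = 0) (i : Fin n) : 0 < v i := by
  refine lt_of_le_of_ne (hv i) fun h => ?_
  obtain ⟨k, _, hk⟩ := exists_pos hM hI hv hv0 ⟨i, h.symm⟩
  rw [hA] at hk
  exact lt_irrefl _ hk

lemma pospart_lemma {A : Matrix (Fin n) (Fin n) ℝ} (hM : Metz A) (hI : matIrred A)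
    {w : Fin n → ℝ} (hw : A *ᵥ w = 0) (h1 : ∃ i, 0 < w i) (h2 : ∃ i, w i < 0) :
    ∃ p : Fin n → ℝ, 0 ≤ p ∧ 0 ≤ A *ᵥ p ∧ A *ᵥ p ≠ 0 := by
  obtain ⟨a, ha⟩ := h1
  obtain ⟨b, hb⟩ := h2
  set p : Fin n → ℝ := fun i => max (w i) 0 with hp
  set q : Fin n → ℝ := fun i => max (-w i) 0 with hq
  have hp0 : 0 ≤ p := fun i => le_max_right _ _
  have hq0 : 0 ≤ q := fun i => le_max_right _ _
  have hpq : p = w + q := by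
    funext i
    simp only [hp, hq, Pi.add_apply]
    rcases le_total (w i) 0 with h | h
    · rw [max_eq_right h, max_eq_left (by linarith)]; ring
    · rw [max_eq_left h, max_eq_right (by linarith)]; ring
  refine ⟨p, hp0, fun i => ?_, fun h => ?_⟩
  · rcases le_total (w i) 0 with h | h
    · exact mulVec_nonneg_of_zero hM hp0 (max_eq_right h)
    · rw [hpq, mulVec_add, hw, zero_add]
      exact mulVec_nonneg_of_zero hM hq0 (max_eq_right (by linarith))
  · have hne : p ≠ 0 := by
      intro h0
      have h3 := congrFun h0 a
      simp only [hp, Pi.zero_apply] at h3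
      have := le_max_left (w a) 0
      linarith
    have h3 := pos_of_sub hM hI hp0 hne h b
    simp only [hp] at h3
    rw [max_eq_right hb.le] at h3
    exact lt_irrefl _ h3

lemma small_pos {q r : Fin n → ℝ} (hq : 0 ≤ q) (hr : ∀ i, q i = 0 → 0 ≤ r i) :
    ∃ ε : ℝ, 0 < ε ∧ 0 ≤ q + ε • r ∧ (∀ i, 0 < q i → 0 < (q + ε • r) i) ∧
      ∀ i, q i = 0 → 0 < r i → 0 < (q + ε • r) i := by
  have h : ∀ᶠ ε in 𝓝[>] (0:ℝ), ∀ i, 0 < q i → 0 < (q + ε • r) i := by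
    rw [eventually_all]
    intro i
    by_cases hi : 0 < q i
    · have : Tendsto (fun ε : ℝ => (q + ε • r) i) (𝓝 0) (𝓝 ((q + (0:ℝ) • r) i)) := by
        apply Continuous.tendsto
        simp only [Pi.add_apply, Pi.smul_apply]
        fun_prop
      have h2 := this.eventually (Ioi_mem_nhds (a := 0) (by simpa using hi))
      filter_upwards [nhdsWithin_le_nhds h2] with ε h _ using h
    · exact Eventually.of_forall fun ε h => absurd h hi
  obtain ⟨ε, h1, h2⟩ := (h.and self_mem_nhdsWithin).exists
  have hε : 0 < ε := h2
  refine ⟨ε, hε, fun i => ?_, h1, fun i h0 hri => ?_⟩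
  · rcases (hq i).eq_or_lt with h0 | h0
    · have h0 : q i = 0 := h0.symm
      have := mul_nonneg hε.le (hr i h0)
      simpa [h0] using this
    · exact (h1 i h0).le
  · simpa [h0] using mul_pos hε hri

lemma spread {B : Matrix (Fin n) (Fin n) ℝ} (hM : Metz B) (hI : matIrred B) (k : ℕ) :
    ∀ u : Fin n → ℝ, 0 ≤ u → 0 ≤ B *ᵥ u → B *ᵥ u ≠ 0 →
      (Finset.univ.filter fun i => (B *ᵥ u) i = 0).card ≤ k →
      ∃ u' : Fin n → ℝ, 0 ≤ u' ∧ ∀ i, 0 < (B *ᵥ u') i := by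
  induction k with
  | zero =>
    intro u hu hq hq0 hc
    refine ⟨u, hu, fun i => lt_of_le_of_ne (hq i) fun h => ?_⟩
    have h2 := Finset.card_eq_zero.1 (Nat.le_zero.1 hc)
    have : i ∈ (Finset.univ.filter fun i => (B *ᵥ u) i = 0) := by simp [← h]
    rw [h2] at this
    simp at this
  | succ k ih =>
    intro u hu hq hq0 hc
    by_cases hz : ∃ i, (B *ᵥ u) i = 0
    · obtain ⟨i, hi, hpos⟩ := exists_pos hM hI hq hq0 hz
      obtain ⟨ε, hε, e1, e2, e3⟩ := small_pos (r := B *ᵥ (B *ᵥ u)) hq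
        fun i hi => mulVec_nonneg_of_zero hM hq hi
      have hB : B *ᵥ (u + ε • (B *ᵥ u)) = B *ᵥ u + ε • (B *ᵥ (B *ᵥ u)) := by
        rw [mulVec_add, mulVec_smul]
      refine ih (u + ε • (B *ᵥ u)) (add_nonneg hu (smul_nonneg hε.le hq)) (hB ▸ e1) ?_ ?_
      · rw [hB]
        intro h
        have := e3 i hi hpos
        rw [h] at this
        exact lt_irrefl _ this
      · rw [hB]
        refine Nat.lt_succ_iff.1 (lt_of_lt_of_le (Finset.card_lt_card ?_) hc)
        rw [Finset.ssubset_iff_of_subset]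
        · refine ⟨i, by simpa using hi, ?_⟩
          simp only [Finset.mem_filter, Finset.mem_univ, true_and]
          exact (e3 i hi hpos).ne'
        · intro j hj
          simp only [Finset.mem_filter, Finset.mem_univ, true_and] at hj ⊢
          by_contra hne
          exact (e2 j (lt_of_le_of_ne (hq j) (Ne.symm hne))).ne' hj
    · push Not at hz
      exact ⟨u, hu, fun i => lt_of_le_of_ne (hq i) (hz i).symm⟩

lemma spread' {B : Matrix (Fin n) (Fin n) ℝ} (hM : Metz B) (hI : matIrred B) {u : Fin n → ℝ}
    (hu : 0 ≤ u) (hq : 0 ≤ B *ᵥ u) (hq0 : B *ᵥ u ≠ 0) :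
    ∃ u' : Fin n → ℝ, (∀ i, 0 < u' i) ∧ ∀ i, 0 < (B *ᵥ u') i := by
  obtain ⟨u', h1, h2⟩ := spread hM hI _ u hu hq hq0 le_rfl
  obtain ⟨ε, hε, e1, e2, e3⟩ := small_pos (q := B *ᵥ u') (r := B *ᵥ (B *ᵥ u'))
    (fun i => (h2 i).le) fun i hi => absurd hi (h2 i).ne'
  refine ⟨u' + ε • (B *ᵥ u'), fun i => ?_, fun i => ?_⟩
  · exact add_pos_of_nonneg_of_pos (h1 i) (mul_pos hε (h2 i))
  · rw [mulVec_add, mulVec_smul]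
    exact e2 i (h2 i)

lemma ker_lemma {A : Matrix (Fin n) (Fin n) ℝ} (hM : Metz A) (hI : matIrred A)
    {w : Fin n → ℝ} (hw : A *ᵥ w = 0) (h1 : ∃ i, 0 < w i) (h2 : ∃ i, w i < 0) :
    ∃ u : Fin n → ℝ, (∀ i, 0 < u i) ∧ ∀ i, 0 < (Aᵀ *ᵥ u) i := by
  have hM' : Metz Aᵀ := fun i j h => hM j i h.symm
  have hI' := irred_transpose hI
  have hw0 : w ≠ 0 := by
    obtain ⟨i, hi⟩ := h1
    rintro rfl
    simp at hi
  have hdet : A.det = 0 := exists_mulVec_eq_zero_iff.1 ⟨w, hw0, hw⟩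
  rw [← det_transpose] at hdet
  obtain ⟨v, hv0, hv⟩ := exists_mulVec_eq_zero_iff.2 hdet
  obtain ⟨p, hp, hAp, hAp0⟩ := pospart_lemma hM hI hw h1 h2
  -- a left kernel vector cannot be nonnegative
  have key : ∀ v : Fin n → ℝ, v ≠ 0 → Aᵀ *ᵥ v = 0 → ¬ 0 ≤ v := by
    intro v hv0 hv hvn
    have hpos := pos_of_sub hM' hI' hvn hv0 hv
    have e : v ⬝ᵥ (A *ᵥ p) = 0 := by
      rw [dotProduct_mulVec, ← mulVec_transpose, hv, zero_dotProduct]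
    obtain ⟨i, hi⟩ : ∃ i, (A *ᵥ p) i ≠ 0 := by
      by_contra hcon
      push Not at hcon
      exact hAp0 (funext hcon)
    have : 0 < v ⬝ᵥ (A *ᵥ p) := Finset.sum_pos' (fun k _ => mul_nonneg (hpos k).le (hAp k))
      ⟨i, Finset.mem_univ _, mul_pos (hpos i) (lt_of_le_of_ne (hAp i) hi.symm)⟩
    linarith
  have k1 : ∃ i, v i < 0 := by
    have := key v hv0 hv
    rw [Pi.le_def] at this
    push Not at this
    exact this
  have k2 : ∃ i, 0 < v i := by
    have := key (-v) (neg_ne_zero.2 hv0) (by rw [mulVec_neg, hv, neg_zero])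
    rw [Pi.le_def] at this
    push Not at this
    obtain ⟨i, hi⟩ := this
    exact ⟨i, by simpa using hi⟩
  obtain ⟨q, hq, hq1, hq2⟩ := pospart_lemma hM' hI' hv k2 k1
  exact spread' hM' hI' hq hq1 hq2

end LinAlg
end

section
open Matrix

namespace MonoFlow

variable {n : ℕ} {X : Set (Fin n → ℝ)} {γ : (Fin n → ℝ) → ℝ → (Fin n → ℝ)}

lemma accum (F : MonoFlow X γ) {x : Fin n → ℝ} (hx : x ∈ X) {e e' : Fin n → ℝ}
    (he : e ∈ omegaSet X (γ x)) (he' : e' ∈ omegaSet X (γ x)) {ε : ℝ} (hε : 0 < ε)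
    (h : ε < dist e' e) : ∃ k ∈ omegaSet X (γ x), dist k e = ε := by
  have key : ∀ m : ℕ, ∃ t : ℝ, (m : ℝ) ≤ t ∧ dist (γ x t) e = ε := by
    intro m
    obtain ⟨t1, ht1, h1⟩ := (omega_iff.1 he).2 ε hε m
    obtain ⟨t2, ht2, h2⟩ := (omega_iff.1 he').2 (dist e' e - ε) (by linarith) t1
    have h3 := dist_triangle e' (γ x t2) e
    rw [dist_comm e' (γ x t2)] at h3
    have hm : (0:ℝ) ≤ m := Nat.cast_nonneg m
    have hc : ContinuousOn (fun t => dist (γ x t) e) (Icc t1 t2) :=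
      (continuous_id.dist continuous_const).comp_continuousOn
        ((F.ctime x hx).mono fun t (ht : t ∈ Icc t1 t2) => (hm.trans ht1).trans ht.1)
    obtain ⟨t, ht, hte⟩ := intermediate_value_Icc ht2 hc
      (show ε ∈ Icc (dist (γ x t1) e) (dist (γ x t2) e) from ⟨h1.le, by linarith⟩)
    exact ⟨t, le_trans ht1 ht.1, hte⟩
  choose t ht hte using key
  have htop : Tendsto t atTop atTop := tendsto_atTop_mono ht tendsto_natCast_atTop_atTop
  obtain ⟨p, hp, ψ, hψ, hl⟩ := F.omega_sub hx htop
  refine ⟨p, hp, ?_⟩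
  have h1 := hl.dist (tendsto_const_nhds (x := e))
  simp only [hte] at h1
  exact tendsto_nhds_unique h1 tendsto_const_nhds

end MonoFlow

lemma jac_mulVec {n : ℕ} (f : (Fin n → ℝ) → (Fin n → ℝ)) (e w : Fin n → ℝ) :
    (Matrix.of (jacMat f e)) *ᵥ w = fderiv ℝ f e w := by
  funext i
  rw [fderiv_coord (fderiv ℝ f e) w i]
  show ∑ j, jacMat f e i j * w j = _
  exact Finset.sum_congr rfl fun j _ => mul_comm _ _

lemma strLt_lt_of_ne {n : ℕ} {a b : Fin n → ℝ} (h : strLt a b) (hne : a ≠ b) : a < b :=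
  lt_of_le_of_ne h.le hne

/-- A non-isolated point of an unordered set of zeros has a left-expanding positive vector. -/
lemma kernel_at {n : ℕ} {X : Set (Fin n → ℝ)} (hX : IsOpen X)
    {f : (Fin n → ℝ) → (Fin n → ℝ)} (hf : ContDiffOn ℝ 1 f X) (hcoop : coopVF f X)
    (hirr : ∀ x ∈ X, matIrred (jacMat f x)) {K : Set (Fin n → ℝ)} (hKX : K ⊆ X)
    (hz : ∀ k ∈ K, f k = 0) (hno : ∀ p ∈ K, ∀ q ∈ K, ¬ p < q) {e : Fin n → ℝ} (he : e ∈ K)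
    {ρ : ℝ} (hρ : 0 < ρ) (hacc : ∀ ε, 0 < ε → ε < ρ → ∃ k ∈ K, dist k e = ε) :
    ∃ u : Fin n → ℝ, (∀ i, 0 < u i) ∧
      ∀ j, 0 < ∑ i, u i * fderiv ℝ f e (Pi.single j 1) i := by
  have hm : ∀ m : ℕ, (0:ℝ) < m + 2 := fun m => by positivity
  have hk : ∀ m : ℕ, ∃ k ∈ K, dist k e = ρ / (m + 2) := fun m =>
    hacc _ (div_pos hρ (hm m)) (by
      rw [div_lt_iff₀ (hm m)]
      have : (0:ℝ) ≤ m := Nat.cast_nonneg m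
      nlinarith)
  choose k hkK hkd using hk
  set c : ℕ → ℝ := fun m => (m + 2) / ρ with hc
  have hcpos : ∀ m, 0 < c m := fun m => div_pos (hm m) hρ
  have hnorm : ∀ m, ‖c m • (k m - e)‖ = 1 := by
    intro m
    rw [norm_smul, ← dist_eq_norm, hkd, Real.norm_eq_abs, abs_of_pos (hcpos m), hc]
    have := (hm m).ne'
    field_simp
  obtain ⟨w, hw, ψ, hψ, hlim⟩ := (isCompact_sphere (0 : Fin n → ℝ) 1).tendsto_subseq
    (x := fun m => c m • (k m - e)) fun m => by simpa using hnorm m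
  have hw1 : ‖w‖ = 1 := by simpa using hw
  have hw0 : w ≠ 0 := by
    rintro rfl
    simp at hw1
  have hne : ∀ m, k m ≠ e := by
    intro m h
    have := hkd m
    rw [h, dist_self] at this
    exact (div_pos hρ (hm m)).ne this
  have hfd : HasFDerivAt f (fderiv ℝ f e) e :=
    ((hf.contDiffAt (hX.mem_nhds (hKX he))).differentiableAt (by simp)).hasFDerivAt
  have hdlim : Tendsto (fun m => k (ψ m) - e) atTop (𝓝 0) := by
    rw [tendsto_zero_iff_norm_tendsto_zero]
    have h1 : Tendsto (fun m : ℕ => ρ / ((m:ℝ) + 2)) atTop (𝓝 0) :=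
      tendsto_const_nhds.div_atTop
        (tendsto_atTop_add_const_right _ _ tendsto_natCast_atTop_atTop)
    refine (h1.comp hψ.tendsto_atTop).congr fun m => ?_
    rw [← dist_eq_norm, hkd]; rfl
  have hl := (hasFDerivWithinAt_univ.2 hfd).lim (c := fun m => c (ψ m))
    (d := fun m => k (ψ m) - e) (v := w) hdlim
    (Eventually.of_forall fun _ => mem_univ _) hlim
  have hAw : fderiv ℝ f e w = 0 := by
    refine tendsto_nhds_unique hl ?_
    have : (fun m => c (ψ m) • (f (e + (k (ψ m) - e)) - f e)) = fun _ => 0 := by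
      funext m
      rw [add_sub_cancel, hz _ (hkK _), hz _ he, sub_zero, smul_zero]
    rw [this]
    exact tendsto_const_nhds
  have hM : Metz (Matrix.of (jacMat f e)) := fun i j h => hcoop e (hKX he) i j h
  have hI : matIrred (Matrix.of (jacMat f e)) := hirr e (hKX he)
  have hmul : (Matrix.of (jacMat f e)) *ᵥ w = 0 := by rw [jac_mulVec, hAw]
  have h1 : ∃ i, w i < 0 := by
    by_contra hcon
    push Not at hcon
    have hp := pos_of_sub hM hI hcon hw0 hmul
    obtain ⟨m, hm⟩ := (eventually_strLt tendsto_const_nhds hlim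
      (show strLt (0 : Fin n → ℝ) w from hp)).exists
    refine hno e he _ (hkK (ψ m)) (strLt_lt_of_ne (fun i => ?_) (hne _).symm)
    have := hm i
    simp only [Pi.zero_apply, Function.comp, Pi.smul_apply, Pi.sub_apply, smul_eq_mul] at this
    have := (mul_pos_iff_of_pos_left (hcpos _)).1 this
    linarith
  have h2 : ∃ i, 0 < w i := by
    by_contra hcon
    push Not at hcon
    have hp := pos_of_sub hM hI (v := -w) (fun i => by simpa using hcon i) (neg_ne_zero.2 hw0)
      (by rw [mulVec_neg, hmul, neg_zero])
    obtain ⟨m, hm⟩ := (eventually_strLt hlim tendsto_const_nhds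
      (show strLt w (0 : Fin n → ℝ) from fun i => by simpa using hp i)).exists
    refine hno _ (hkK (ψ m)) e he (strLt_lt_of_ne (fun i => ?_) (hne _))
    have := hm i
    simp only [Pi.zero_apply, Function.comp, Pi.smul_apply, Pi.sub_apply, smul_eq_mul] at this
    by_contra hcon
    have := mul_nonneg (hcpos (ψ m)).le (sub_nonneg.2 (not_lt.1 hcon))
    linarith
  obtain ⟨u, hu, hu'⟩ := ker_lemma hM hI hmul h2 h1
  refine ⟨u, hu, fun j => ?_⟩
  have h3 : 0 < ∑ i, jacMat f e i j * u i := hu' j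
  refine h3.trans_eq (Finset.sum_congr rfl fun i _ => mul_comm _ _)

lemma local_growth {n : ℕ} {X : Set (Fin n → ℝ)} (hX : IsOpen X)
    {f : (Fin n → ℝ) → (Fin n → ℝ)} (hf : ContDiffOn ℝ 1 f X) {e u : Fin n → ℝ} (he : e ∈ X)
    (hu' : ∀ j, 0 < ∑ i, u i * fderiv ℝ f e (Pi.single j 1) i) :
    ∃ s > (0:ℝ), ∃ r > (0:ℝ), ∀ a ∈ Metric.ball e r, ∀ b ∈ Metric.ball e r, a ≤ b →
      s * ∑ i, u i * (b i - a i) ≤ ∑ i, u i * (f b i - f a i) := by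
  have h1 : ∀ᶠ s in 𝓝[>] (0:ℝ), ∀ j, s * u j < ∑ i, u i * fderiv ℝ f e (Pi.single j 1) i := by
    rw [eventually_all]
    intro j
    apply nhdsWithin_le_nhds
    have : Tendsto (fun s : ℝ => s * u j) (𝓝 0) (𝓝 0) := by
      simpa using (tendsto_id (α := ℝ) (x := 𝓝 0)).mul_const (u j)
    exact this.eventually (Iio_mem_nhds (hu' j))
  obtain ⟨s, hs, hs0⟩ := (h1.and self_mem_nhdsWithin).exists
  have hcd : ContinuousAt (fderiv ℝ f) e :=
    (hf.continuousOn_fderiv_of_isOpen hX le_rfl).continuousAt (hX.mem_nhds he)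
  have h2 : ∀ᶠ z in 𝓝 e, z ∈ X ∧ ∀ j, s * u j < ∑ i, u i * fderiv ℝ f z (Pi.single j 1) i := by
    refine Filter.Eventually.and (hX.mem_nhds he) ?_
    rw [eventually_all]
    intro j
    have : Tendsto (fun z => ∑ i, u i * fderiv ℝ f z (Pi.single j 1) i) (𝓝 e)
        (𝓝 (∑ i, u i * fderiv ℝ f e (Pi.single j 1) i)) := by
      refine tendsto_finsetSum _ fun i _ => Tendsto.const_mul _ ?_
      have h3 : ContinuousAt (fun z => fderiv ℝ f z (Pi.single j 1)) e :=
        hcd.clm_apply continuousAt_const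
      exact (continuous_apply i).continuousAt.tendsto.comp h3.tendsto
    exact this.eventually (Ioi_mem_nhds (hs j))
  obtain ⟨r, hr, hball⟩ := Metric.eventually_nhds_iff_ball.1 h2
  refine ⟨s, hs0, r, hr, fun a ha b hb hab => ?_⟩
  have hseg : segment ℝ a b ⊆ Metric.ball e r := (convex_ball e r).segment_subset ha hb
  have := mvt_lower hX hf hab (fun z hz => (hball z (hseg hz)).1) u (fun j => s * u j)
    fun z hz j => ((hball z (hseg hz)).2 j).le
  rw [Finset.mul_sum]
  refine le_trans (le_of_eq (Finset.sum_congr rfl fun j _ => by ring)) this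

/-- the tail maximum of a positive function tending to zero -/
lemma tail_max {D : ℝ → ℝ} (hc : ContinuousOn D (Ici 0)) (hpos : ∀ t, 0 < t → 0 < D t)
    (hlim : Tendsto D atTop (𝓝 0)) {T : ℝ} (hT : 0 < T) :
    ∃ t ≥ T, ∀ s ≥ T, D s ≤ D t := by
  obtain ⟨R, hR⟩ := eventually_atTop.1 (hlim.eventually (Iio_mem_nhds (hpos T hT)))
  have hne : (Icc T (max T R)).Nonempty := ⟨T, le_rfl, le_max_left _ _⟩
  obtain ⟨t, ht, hmax⟩ := isCompact_Icc.exists_isMaxOn hne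
    (hc.mono fun s hs => hT.le.trans hs.1)
  refine ⟨t, ht.1, fun s hs => ?_⟩
  rcases le_total s (max T R) with h | h
  · exact hmax ⟨hs, h⟩
  · have h1 : D s < D T := hR s ((le_max_right _ _).trans h)
    have h2 : D T ≤ D t := hmax (⟨le_rfl, le_max_left _ _⟩ : T ∈ Icc T (max T R))
    linarith

lemma improved {n : ℕ} {X : Set (Fin n → ℝ)} (hX : IsOpen X)
    {f : (Fin n → ℝ) → (Fin n → ℝ)} (hf : ContDiffOn ℝ 1 f X) (hcoop : coopVF f X)
    (hirr : ∀ x ∈ X, matIrred (jacMat f x)) {γ : (Fin n → ℝ) → ℝ → (Fin n → ℝ)}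
    (F : MonoFlow X γ) (hsol : ∀ x ∈ X, IsSolOn f X (Ici 0) (γ x))
    {x y : Fin n → ℝ} (hx : x ∈ X) (hy : y ∈ X) (hxy : x < y)
    (hω : omegaSet X (γ x) = omegaSet X (γ y)) : ∃ e, omegaSet X (γ x) = {e} := by
  by_contra hcon
  push Not at hcon
  have hfix : ∀ k ∈ omegaSet X (γ x), ∀ s, 0 ≤ s → γ k s = k := fun k hk s hs =>
    F.inter_eq hx hy hxy hk (hω ▸ hk) hs
  have hz : ∀ k ∈ omegaSet X (γ x), f k = 0 := by
    intro k hk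
    have h1 := (hsol k hk.1).hasDerivAt' one_pos
    rw [hfix k hk 1 zero_le_one] at h1
    have h2 : HasDerivAt (γ k) 0 1 := by
      refine (hasDerivAt_const (1:ℝ) k).congr_of_eventuallyEq ?_
      filter_upwards [Ioi_mem_nhds (zero_lt_one (α := ℝ))] with t ht
      exact hfix k hk t (le_of_lt ht)
    exact h1.unique h2
  set D : ℝ → ℝ := fun t => ∑ i, (γ y t i - γ x t i) with hD
  have hn : (Finset.univ : Finset (Fin n)).Nonempty := by
    obtain ⟨_, i, _⟩ := Pi.lt_def.1 hxy
    exact ⟨i, Finset.mem_univ i⟩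
  have hDpos : ∀ t, 0 < t → 0 < D t := fun t ht =>
    Finset.sum_pos (fun i _ => sub_pos.2 (F.strong x hx y hy hxy t ht i)) hn
  have hci : ∀ z ∈ X, ∀ i, ContinuousOn (fun t => γ z t i) (Ici 0) := fun z hz i =>
    continuousOn_pi.1 (F.ctime z hz) i
  have hDc : ContinuousOn D (Ici 0) :=
    continuousOn_finsetSum _ fun i _ => (hci y hy i).sub (hci x hx i)
  have hDlim : Tendsto D atTop (𝓝 0) := by
    apply tendsto_of_seq_tendsto
    intro t ht
    apply tendsto_of_subseq_tendsto
    intro ns hns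
    obtain ⟨p, hp, ψ, hψ, hl⟩ := F.omega_sub hx (ht.comp hns)
    have hl' := F.inter_up hx hy hxy ((ht.comp hns).comp hψ.tendsto_atTop) (hω ▸ hp) hl
    refine ⟨ψ, ?_⟩
    have : Tendsto (fun m => ∑ i, (γ y (t (ns (ψ m))) i - γ x (t (ns (ψ m))) i)) atTop
        (𝓝 (∑ i : Fin n, (p i - p i))) :=
      tendsto_finsetSum _ fun i _ => (tendsto_pi_nhds.1 hl' i).sub (tendsto_pi_nhds.1 hl i)
    simp only [sub_self, Finset.sum_const_zero] at this
    exact this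
  have hmax : ∀ k : ℕ, ∃ t ≥ (k:ℝ) + 1, ∀ s ≥ (k:ℝ) + 1, D s ≤ D t := fun k =>
    tail_max hDc hDpos hDlim (by positivity)
  choose t ht htm using hmax
  have htop : Tendsto t atTop atTop := tendsto_atTop_mono (fun k => ht k)
    (tendsto_atTop_add_const_right _ _ tendsto_natCast_atTop_atTop)
  obtain ⟨e, he, ψ, hψ, hl⟩ := F.omega_sub hx htop
  have hl' := F.inter_up hx hy hxy (htop.comp hψ.tendsto_atTop) (hω ▸ he) hl
  -- another point of the limit set
  obtain ⟨e', he', hne⟩ : ∃ e' ∈ omegaSet X (γ x), e' ≠ e := by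
    by_contra h
    push Not at h
    exact hcon e (eq_singleton_iff_unique_mem.2 ⟨he, h⟩)
  obtain ⟨u, hu, hu'⟩ := kernel_at hX hf hcoop hirr (K := omegaSet X (γ x)) (fun k hk => hk.1) hz
    (fun p hp q hq => F.nonorder hx hp hq) he (dist_pos.2 hne)
    fun ε h1 h2 => F.accum hx he he' h1 h2
  obtain ⟨s, hs, r, hr, hgrow⟩ := local_growth hX hf he.1 hu'
  obtain ⟨i₀, _, hi₀⟩ := Finset.exists_min_image Finset.univ u hn
  obtain ⟨i₁, _, hi₁⟩ := Finset.exists_max_image Finset.univ u hn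
  obtain ⟨T, hT0, hT⟩ : ∃ T > 0, u i₁ / u i₀ < Real.exp (s * T) := by
    have : Tendsto (fun T : ℝ => Real.exp (s * T)) atTop atTop :=
      Real.tendsto_exp_atTop.comp (tendsto_id.const_mul_atTop hs)
    obtain ⟨T, h1, h2⟩ := ((eventually_gt_atTop (0:ℝ)).and
      (this.eventually_gt_atTop (u i₁ / u i₀))).exists
    exact ⟨T, h1, h2⟩
  obtain ⟨δ, hδ, hnear⟩ := F.near e he.1 T r hr
  obtain ⟨k, hkx, hky⟩ := ((hl.eventually (Metric.ball_mem_nhds e hδ)).and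
    (hl'.eventually (Metric.ball_mem_nhds e hδ))).exists
  set τ := t (ψ k) with hτ
  have hτ1 : ((ψ k : ℕ) : ℝ) + 1 ≤ τ := ht (ψ k)
  have hτ0 : 0 < τ := by
    have : (0:ℝ) ≤ (ψ k : ℕ) := Nat.cast_nonneg _
    linarith
  have hin : ∀ z ∈ X, γ z τ ∈ Metric.ball e δ → ∀ v ∈ Icc τ (τ + T), γ z v ∈ Metric.ball e r := by
    intro z hz hzb v hv
    have := hnear _ (F.mem z hz τ hτ0.le) hzb (v - τ) ⟨by linarith [hv.1], by linarith [hv.2]⟩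
    rw [hfix e he _ (by linarith [hv.1]), ← F.add z hz τ _ hτ0.le (by linarith [hv.1]),
      add_sub_cancel] at this
    exact this
  have hder : ∀ z ∈ X, ∀ v, 0 < v → ∀ i, HasDerivAt (fun t => γ z t i) (f (γ z v) i) v :=
    fun z hz v hv i => hasDerivAt_pi.1 ((hsol z hz).hasDerivAt' hv) i
  have hexp := exp_growth (g := fun v => ∑ i, u i * (γ y v i - γ x v i))
    (g' := fun v => ∑ i, u i * (f (γ y v) i - f (γ x v) i)) (c := s) (a := τ) (b := τ + T)
    (by linarith)
    (continuousOn_finsetSum _ fun i _ => continuousOn_const.mul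
      (((hci y hy i).sub (hci x hx i)).mono fun v hv => hτ0.le.trans hv.1))
    (fun v hv => by
      have hv0 : 0 < v := hτ0.trans hv.1
      exact HasDerivAt.fun_sum fun i _ => ((hder y hy v hv0 i).sub (hder x hx v hv0 i)).const_mul _)
    (fun v hv => hgrow _ (hin x hx hkx v ⟨hv.1.le, hv.2.le⟩) _ (hin y hy hky v ⟨hv.1.le, hv.2.le⟩)
      (F.mono x hx y hy hxy.le v (hτ0.trans hv.1).le))
  rw [add_sub_cancel_left] at hexp
  have hlow : u i₀ * D τ ≤ ∑ i, u i * (γ y τ i - γ x τ i) := by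
    rw [hD]; simp only [Finset.mul_sum]
    exact Finset.sum_le_sum fun i hi => mul_le_mul_of_nonneg_right (hi₀ i hi)
      (sub_nonneg.2 (F.mono x hx y hy hxy.le τ hτ0.le i))
  have hup : ∑ i, u i * (γ y (τ + T) i - γ x (τ + T) i) ≤ u i₁ * D (τ + T) := by
    rw [hD]; simp only [Finset.mul_sum]
    exact Finset.sum_le_sum fun i hi => mul_le_mul_of_nonneg_right (hi₁ i hi)
      (sub_nonneg.2 (F.mono x hx y hy hxy.le _ (by linarith) i))
  have hDle : D (τ + T) ≤ D τ := htm (ψ k) _ (by linarith)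
  have hDp := hDpos τ hτ0
  rw [div_lt_iff₀ (hu i₀)] at hT
  have c1 : u i₀ * D τ * Real.exp (s * T) ≤ u i₁ * D τ :=
    (mul_le_mul_of_nonneg_right hlow (Real.exp_pos _).le).trans
      (hexp.trans (hup.trans (mul_le_mul_of_nonneg_left hDle (hu i₁).le)))
  have c2 := mul_lt_mul_of_pos_right hT hDp
  nlinarith
end

namespace MonoFlow

variable {n : ℕ} {X : Set (Fin n → ℝ)} {γ : (Fin n → ℝ) → ℝ → (Fin n → ℝ)}

lemma squeeze (F : MonoFlow X γ) {z w z' e : Fin n → ℝ} (hz : z ∈ X) (hw : w ∈ X) (hz' : z' ∈ X)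
    (h1 : z ≤ w) (h2 : w ≤ z') (e1 : omegaSet X (γ z) = {e}) (e2 : omegaSet X (γ z') = {e}) :
    omegaSet X (γ w) = {e} := by
  refine eq_singleton_iff_nonempty_unique_mem.2 ⟨F.omega_nonempty hw, ?_⟩
  rintro q ⟨hq, t, ht, hl⟩
  apply le_antisymm
  · obtain ⟨p, hp, ψ, hψ, h⟩ := F.omega_sub hz' ht
    rw [e2] at hp
    obtain rfl : p = e := hp
    exact F.le_lim hw hz' h2 (ht.comp hψ.tendsto_atTop) (hl.comp hψ.tendsto_atTop) h
  · obtain ⟨p, hp, ψ, hψ, h⟩ := F.omega_sub hz ht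
    rw [e1] at hp
    obtain rfl : p = e := hp
    exact F.le_lim hz hw h1 (ht.comp hψ.tendsto_atTop) h (hl.comp hψ.tendsto_atTop)

lemma below_limit (F : MonoFlow X γ) {x0 : Fin n → ℝ} (hx0 : x0 ∈ X) {x : ℕ → Fin n → ℝ}
    (hx : ∀ m, x m ∈ X) (hlim : Tendsto x atTop (𝓝 x0))
    (h1 : ∀ m, ∀ a ∈ omegaSet X (γ (x m)), ∀ b ∈ omegaSet X (γ (x (m + 1))), a < b)
    (h2 : ∀ m, ∀ a ∈ omegaSet X (γ (x m)), ∀ b ∈ omegaSet X (γ x0), a < b) :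
    ∃ p, omegaSet X (γ x0) = {p} := by
  choose a ha using fun m => F.omega_nonempty (hx m)
  obtain ⟨q', hq'⟩ := F.omega_nonempty hx0
  have hmono : Monotone a := monotone_nat_of_le_succ fun m => (h1 m _ (ha m) _ (ha (m + 1))).le
  have hbdd : ∀ i, BddAbove (range fun m => a m i) := by
    rintro i
    refine ⟨q' i, ?_⟩
    rintro _ ⟨m, rfl⟩
    exact (h2 m _ (ha m) _ hq').le i
  set p : Fin n → ℝ := fun i => ⨆ m, a m i with hp
  have hap : Tendsto a atTop (𝓝 p) :=
    tendsto_pi_nhds.2 fun i => tendsto_atTop_ciSup (fun k l h => hmono h i) (hbdd i)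
  have hle : ∀ m, a m ≤ p := fun m i => le_ciSup (hbdd i) m
  have hpk : ∀ k ∈ omegaSet X (γ x0), p ≤ k := fun k hk =>
    le_of_tendsto' hap fun m => (h2 m _ (ha m) _ hk).le
  refine ⟨p, ?_⟩
  by_cases hpK : p ∈ omegaSet X (γ x0)
  · refine eq_singleton_iff_unique_mem.2 ⟨hpK, fun k hk => ?_⟩
    by_contra hne
    exact F.nonorder hx0 hpK hk (lt_of_le_of_ne (hpk k hk) (Ne.symm hne))
  exfalso
  have hpq : p < q' := lt_of_le_of_ne (hpk q' hq') fun h => hpK (h ▸ hq')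
  have hcz : Tendsto (fun l : ℝ => q' - l • (q' - p)) (𝓝 0) (𝓝 q') := by
    have : Continuous (fun l : ℝ => q' - l • (q' - p)) := by fun_prop
    simpa using this.tendsto 0
  obtain ⟨l, ⟨hl0, hl1⟩, hlX⟩ : ∃ l : ℝ, (0 < l ∧ l < 1) ∧ q' - l • (q' - p) ∈ X := by
    have e1 : ∀ᶠ l in 𝓝[>] (0:ℝ), (0 < l ∧ l < 1) ∧ q' - l • (q' - p) ∈ X := by
      filter_upwards [self_mem_nhdsWithin, nhdsWithin_le_nhds (Iio_mem_nhds (zero_lt_one (α := ℝ))),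
        nhdsWithin_le_nhds (hcz.eventually (F.isOpen.mem_nhds hq'.1))] with l p1 p2 p3
      exact ⟨⟨p1, p2⟩, p3⟩
    exact e1.exists
  set z' := q' - l • (q' - p) with hz'
  have hzm : Tendsto (fun m => q' - l • (q' - a m)) atTop (𝓝 z') :=
    tendsto_const_nhds.sub ((tendsto_const_nhds.sub hap).const_smul l)
  have hz'q : z' < q' := by
    obtain ⟨i1, i, i2⟩ := Pi.lt_def.1 hpq
    refine Pi.lt_def.2 ⟨fun j => ?_, i, ?_⟩
    · have := mul_nonneg hl0.le (sub_nonneg.2 (i1 j))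
      simp only [hz', Pi.sub_apply, Pi.smul_apply, smul_eq_mul]
      linarith
    · have := mul_pos hl0 (sub_pos.2 i2)
      simp only [hz', Pi.sub_apply, Pi.smul_apply, smul_eq_mul]
      linarith
  -- the image sequence still tends to `p`
  have hb : Tendsto (fun m => γ (a (m + 1)) 1) atTop (𝓝 p) := by
    have s1 : Tendsto (fun m => a (m + 2)) atTop (𝓝 p) := hap.comp (tendsto_add_atTop_nat 2)
    have hω : ∀ m, γ (a (m + 1)) 1 ∈ omegaSet X (γ (x (m + 1))) := fun m =>
      F.omega_inv (hx _) (ha _) zero_le_one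
    rw [tendsto_pi_nhds]
    intro i
    refine tendsto_of_tendsto_of_tendsto_of_le_of_le (tendsto_pi_nhds.1 hap i)
      (tendsto_pi_nhds.1 s1 i) (fun m => ?_) fun m => ?_
    · exact (h1 m _ (ha m) _ (hω m)).le i
    · exact (h1 (m + 1) _ (hω m) _ (ha _)).le i
  have hpz : p ≤ γ z' 1 := by
    have s1 : Tendsto (fun m => q' - l • (q' - a (m + 1))) atTop (𝓝 z') :=
      hzm.comp (tendsto_add_atTop_nat 1)
    refine le_of_tendsto_of_tendsto hb ((F.cinit hlX zero_le_one).comp s1) ?_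
    filter_upwards [s1.eventually (F.isOpen.mem_nhds hlX)] with m hm
    refine F.mono _ (ha _).1 _ hm (fun i => ?_) 1 zero_le_one
    have := (h2 _ _ (ha (m + 1)) _ hq').le i
    have := mul_nonneg (sub_nonneg.2 hl1.le) (sub_nonneg.2 this)
    simp only [Pi.sub_apply, Pi.smul_apply, smul_eq_mul]
    linarith
  have hst := F.strong z' hlX q' hq'.1 hz'q 1 one_pos
  obtain ⟨_, t, ht, hlq⟩ := F.omega_inv hx0 hq' zero_le_one
  obtain ⟨k, hk, hk0⟩ := ((eventually_strLt tendsto_const_nhds hlq hst).and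
    (ht.eventually_ge_atTop 0)).exists
  obtain ⟨m, hm⟩ := (eventually_strLt tendsto_const_nhds ((F.cinit hx0 hk0).comp hlim) hk).exists
  have hkey : ∀ s, 0 ≤ s → a (m + 1) ≤ γ (x m) (t k + s) := by
    intro s hs
    have c1 : a (m + 2) ≤ γ (x m) (t k) := (hle _).trans (hpz.trans hm.le)
    have c2 := F.mono _ (ha _).1 _ (F.mem _ (hx m) _ hk0) c1 s hs
    rw [← F.add _ (hx m) _ _ hk0 hs] at c2
    exact (h1 (m + 1) _ (ha _) _ (F.omega_inv (hx _) (ha _) hs)).le.trans c2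
  obtain ⟨_, τ, hτ, hlτ⟩ := ha m
  have : a (m + 1) ≤ a m := by
    refine ge_of_tendsto hlτ ?_
    filter_upwards [hτ.eventually_ge_atTop (t k)] with j hj
    simpa using hkey (τ j - t k) (by linarith)
  exact absurd (h1 m _ (ha m) _ (ha (m + 1))) this.not_gt

end MonoFlow

/-- generic convergence for cooperative irreducible systems. -/
theorem stmt_3 {n : ℕ} {X : Set (Fin n → ℝ)} (hX : IsOpen X) (hpc : pconvex X)
    {f : (Fin n → ℝ) → (Fin n → ℝ)} (hf : ContDiffOn ℝ 1 f X) (hcoop : coopVF f X)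
    (hirr : ∀ x ∈ X, matIrred (jacMat f x))
    (γ : (Fin n → ℝ) → ℝ → (Fin n → ℝ))
    (hsol : ∀ x ∈ X, IsSolOn f X (Set.Ici 0) (γ x) ∧ γ x 0 = x ∧
      IsCompact (closure (γ x '' Set.Ici 0)) ∧ closure (γ x '' Set.Ici 0) ⊆ X) :
    ∃ Y : Set (Fin n → ℝ), Y ⊆ X ∧ IsOpen Y ∧ X ⊆ closure Y ∧
      ∀ x ∈ Y, ∃ p : Fin n → ℝ, omegaSet X (γ x) = {p} := by
  have F := monoFlow_of hX hpc hf hcoop hirr γ hsol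
  rcases Nat.eq_zero_or_pos n with rfl | hn
  · refine ⟨X, Subset.rfl, hX, subset_closure, fun x hx => ?_⟩
    obtain ⟨p, hp⟩ := F.omega_nonempty hx
    exact ⟨p, eq_singleton_iff_unique_mem.2 ⟨hp, fun q _ => Subsingleton.elim _ _⟩⟩
  have hlt : ∀ {a b : Fin n → ℝ}, strLt a b → a < b := fun {a b} h =>
    Pi.lt_def.2 ⟨h.le, ⟨0, hn⟩, h _⟩
  set S : Set (Fin n → ℝ) := {x | x ∈ X ∧ ∃ p, omegaSet X (γ x) = {p}} with hS
  refine ⟨interior S, fun x hx => (interior_subset hx).1, isOpen_interior, ?_,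
    fun x hx => (interior_subset hx).2⟩
  intro x hx
  rw [mem_closure_iff]
  intro o ho hxo
  have hU : IsOpen (o ∩ X) := ho.inter hX
  by_cases hc : ∃ z ∈ o ∩ X, ∃ z' ∈ o ∩ X, strLt z z' ∧ omegaSet X (γ z) = omegaSet X (γ z')
  · obtain ⟨z, hz, z', hz', hzz, hω⟩ := hc
    obtain ⟨e, he⟩ := improved hX hf hcoop hirr F (fun x hx => (hsol x hx).1) hz.2 hz'.2
      (hlt hzz) hω
    have hVo : IsOpen {w | w ∈ o ∩ X ∧ strLt z w ∧ strLt w z'} := by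
      refine hU.inter (IsOpen.inter ?_ ?_)
      · exact isOpen_strLt.preimage (f := fun w : Fin n → ℝ => (z, w)) (by fun_prop)
      · exact isOpen_strLt.preimage (f := fun w : Fin n → ℝ => (w, z')) (by fun_prop)
    have hVS : {w | w ∈ o ∩ X ∧ strLt z w ∧ strLt w z'} ⊆ S := by
      rintro w ⟨hw, w1, w2⟩
      exact ⟨hw.2, e, F.squeeze hz.2 hw.2 hz'.2 w1.le w2.le he (hω ▸ he)⟩
    have hcz : Tendsto (fun l : ℝ => z + l • (z' - z)) (𝓝 0) (𝓝 z) := by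
      have : Continuous (fun l : ℝ => z + l • (z' - z)) := by fun_prop
      simpa using this.tendsto 0
    have e1 : ∀ᶠ l in 𝓝[>] (0:ℝ), (0 < l ∧ l < 1) ∧ z + l • (z' - z) ∈ o ∩ X := by
      filter_upwards [self_mem_nhdsWithin, nhdsWithin_le_nhds (Iio_mem_nhds (zero_lt_one (α := ℝ))),
        nhdsWithin_le_nhds (hcz.eventually (hU.mem_nhds hz))] with l p1 p2 p3
      exact ⟨⟨p1, p2⟩, p3⟩
    obtain ⟨l, ⟨l0, l1⟩, hl⟩ := e1.exists
    refine ⟨z + l • (z' - z), hl.1, interior_maximal hVS hVo ⟨hl, fun i => ?_, fun i => ?_⟩⟩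
    · have := mul_pos l0 (sub_pos.2 (hzz i))
      simp only [Pi.add_apply, Pi.sub_apply, Pi.smul_apply, smul_eq_mul]
      linarith
    · have := mul_pos (sub_pos.2 l1) (sub_pos.2 (hzz i))
      simp only [Pi.add_apply, Pi.sub_apply, Pi.smul_apply, smul_eq_mul]
      linarith
  · push Not at hc
    have hc' : ∀ z ∈ o ∩ X, ∀ z' ∈ o ∩ X, strLt z z' →
        ∀ a ∈ omegaSet X (γ z), ∀ b ∈ omegaSet X (γ z'), a < b := fun z hz z' hz' h =>
      (F.dichotomy hz.2 hz'.2 (hlt h)).resolve_right (hc z hz z' hz' h)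
    refine ⟨x, hxo, interior_maximal (s := S) (t := o ∩ X) ?_ hU ⟨hxo, hx⟩⟩
    intro x0 hx0
    refine ⟨hx0.2, ?_⟩
    obtain ⟨ρ, hρ, hball⟩ := Metric.isOpen_iff.1 hU x0 hx0
    set s : ℕ → ℝ := fun m => ρ / (m + 2) with hs
    have hs0 : ∀ m, 0 < s m := fun m => by simp only [hs]; positivity
    have hsρ : ∀ m, s m < ρ := fun m => by
      have h0 : (0:ℝ) ≤ m := Nat.cast_nonneg m
      simp only [hs]
      rw [div_lt_iff₀ (by linarith)]
      nlinarith
    have hanti : ∀ m, s (m + 1) < s m := fun m => by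
      have h0 : (0:ℝ) ≤ m := Nat.cast_nonneg m
      simp only [hs]
      push_cast
      exact div_lt_div_of_pos_left hρ (by linarith) (by linarith)
    have hslim : Tendsto s atTop (𝓝 0) := tendsto_const_nhds.div_atTop
      (tendsto_atTop_add_const_right _ _ tendsto_natCast_atTop_atTop)
    have hmem : ∀ m, (fun i => x0 i - s m) ∈ o ∩ X := fun m => by
      apply hball
      rw [Metric.mem_ball]
      refine lt_of_le_of_lt ((dist_pi_le_iff (hs0 m).le).2 fun i => ?_) (hsρ m)
      rw [Real.dist_eq, sub_sub_cancel_left, abs_neg, abs_of_pos (hs0 m)]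
    refine F.below_limit hx0.2 (x := fun m i => x0 i - s m) (fun m => (hmem m).2) ?_ ?_ ?_
    · rw [tendsto_pi_nhds]
      intro i
      simpa using (tendsto_const_nhds (x := x0 i)).sub hslim
    · intro m
      exact hc' _ (hmem m) _ (hmem (m + 1)) fun i => sub_lt_sub_left (hanti m) _
    · intro m
      exact hc' _ (hmem m) _ hx0 fun i => sub_lt_self _ (hs0 m)
end
end
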